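/- arXiv:1407.5798 — 5 statements merged into one kernel-verified Lean document; each statement's English description precedes it below -/
import Mathlib

section
/- If the parametric family Q is L₂ differentiable at ϑ ∈ Θ with L₂ derivative Λ_ϑ and Fisher information I_ϑ, then the squared Hellinger-type distance expands as ∫ (√(dQ_{ϑ+h}) − √(dQ_ϑ))² dν = ¼ hᵀ I_ϑ h + o(|h|²) as h → 0; equivalently, ∫ √(dQ_{ϑ+h} · dQ_ϑ) dν = 1 − ⅛ hᵀ I_ϑ h + o(|h|²). -/
open MeasureTheory Filter Topology

noncomputable section

/-- The squared `L²(ν)` error appearing in the defining expansion of `L₂`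
differentiability of a dominated parametric family with `ν`-densities `q ϑ`
and candidate score (`L₂` derivative) `Λ` at `ϑ`. -/
def sqErr {Ωs : Type*} [MeasurableSpace Ωs] {ι : Type*} [Fintype ι]
    (ν : Measure Ωs) (q : (ι → ℝ) → Ωs → ℝ) (ϑ : ι → ℝ) (Λ : Ωs → ι → ℝ)
    (h : ι → ℝ) : ℝ :=
  ∫ y, (Real.sqrt (q (ϑ + h) y) -
      Real.sqrt (q ϑ y) * (1 + (1 / 2) * ∑ i, Λ y i * h i)) ^ 2 ∂ν

/-- `L₂` differentiability at `ϑ` with score `Λ ∈ L₂(Q_ϑ)`: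
`‖√(dQ_{ϑ+h}) - √(dQ_ϑ)(1 + ½ Λᵀ h)‖_{L₂(ν)} = o(|h|)` as `h → 0`. -/
def IsL2Diff {Ωs : Type*} [MeasurableSpace Ωs] {ι : Type*} [Fintype ι]
    (ν : Measure Ωs) (q : (ι → ℝ) → Ωs → ℝ) (ϑ : ι → ℝ) (Λ : Ωs → ι → ℝ) : Prop :=
  Integrable (fun y => (∑ i, Λ y i ^ 2) * q ϑ y) ν ∧
    (fun h : ι → ℝ => sqErr ν q ϑ Λ h) =o[𝓝 0] fun h => ‖h‖ ^ 2

/-- Continuous `L₂` differentiability at `ϑ` with score family `Λ`: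
`L₂` differentiability at `ϑ` together with
`sup_{|t| ≤ 1} ‖√(dQ_{ϑ+h}) Λ_{ϑ+h}ᵀ t - √(dQ_ϑ) Λ_ϑᵀ t‖_{L₂(ν)} → 0` as `h → 0`. -/
def IsContL2Diff {Ωs : Type*} [MeasurableSpace Ωs] {ι : Type*} [Fintype ι]
    (ν : Measure Ωs) (q : (ι → ℝ) → Ωs → ℝ) (Λ : (ι → ℝ) → Ωs → ι → ℝ)
    (ϑ : ι → ℝ) : Prop :=
  IsL2Diff ν q ϑ (Λ ϑ) ∧
    Tendsto (fun h : ι → ℝ => ⨆ t : {t : ι → ℝ // ‖t‖ ≤ 1},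
        ∫ y, (Real.sqrt (q (ϑ + h) y) * (∑ i, Λ (ϑ + h) y i * t.1 i) -
          Real.sqrt (q ϑ y) * (∑ i, Λ ϑ y i * t.1 i)) ^ 2 ∂ν)
      (𝓝 0) (𝓝 0)

/-!
In `L²(ν)` the increment `√q_{ϑ+h} - √q_ϑ` differs from its linearization `½ √q_ϑ Λᵀh` by a
remainder of norm `o(|h|)`, and the linearization has squared norm `¼ hᵀ I_ϑ h = O(|h|²)`. Hence
the squared norms of the increment and of the linearization differ by `o(|h|) * O(|h|) = o(|h|²)`.
The expansion of the affinity is the same statement, since `(√a - √b)² = a + b - 2 √(a b)`.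
-/

open Asymptotics
open scoped ENNReal

lemma isLittleO_sq_sub_sq {α R S : Type*} [SeminormedCommRing R] [NormedDivisionRing S]
    {l : Filter α} {u v : α → R} {g : α → S} (huv : (fun x => u x - v x) =o[l] g) (hv : v =O[l] g) :
    (fun x => u x ^ 2 - v x ^ 2) =o[l] fun x => g x ^ 2 := by
  have h_add : (fun x => u x + v x) =O[l] g :=
    (huv.isBigO.add (hv.add hv)).congr_left fun x => by ring
  simpa only [sq_sub_sq, sq (g _)] using h_add.mul_isLittleO huv

lemma isBigO_sum_sum_mul_mul {ι : Type*} [Fintype ι] (A : ι → ι → ℝ) (l : Filter (ι → ℝ)) :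
    (fun h : ι → ℝ => ∑ i, ∑ j, h i * A i j * h j) =O[l] fun h => ‖h‖ ^ 2 := by
  have h_coord (i : ι) : (fun h : ι → ℝ => h i) =O[l] fun h => ‖h‖ :=
    isBigO_of_le _ fun h => (norm_le_pi_norm h i).trans_eq (norm_norm h).symm
  refine IsBigO.fun_sum fun i _ => IsBigO.fun_sum fun j _ => ?_
  exact (((h_coord i).mul (h_coord j)).const_mul_left (A i j)).congr
    (fun h => by ring) fun h => (sq ‖h‖).symm

section SquareIntegrable

variable {Ω : Type*} [MeasurableSpace Ω] {μ : Measure Ω}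

lemma abs_lpNorm_sub_lpNorm_le {E : Type*} [NormedAddCommGroup E] {p : ℝ≥0∞} {f g : Ω → E}
    (hf : MemLp f p μ) (hg : MemLp g p μ) (hp : 1 ≤ p) :
    |lpNorm f p μ - lpNorm g p μ| ≤ lpNorm (f - g) p μ := by
  have h_left := lpNorm_le_lpNorm_add_lpNorm_sub' (f := f) hg hp
  have h_right := lpNorm_le_lpNorm_add_lpNorm_sub (f := g) hf hp
  rw [abs_sub_le_iff]
  constructor <;> linarith

lemma lpNorm_two_sq {f : Ω → ℝ} (hf : AEStronglyMeasurable f μ) :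
    lpNorm f 2 μ ^ 2 = ∫ y, f y ^ 2 ∂μ := by
  have h_nonneg : 0 ≤ ∫ y, f y ^ 2 ∂μ := integral_nonneg fun y => sq_nonneg (f y)
  rw [lpNorm_eq_integral_norm_rpow_toReal two_ne_zero ENNReal.ofNat_ne_top hf]
  simp only [ENNReal.toReal_ofNat, Real.rpow_two, Real.norm_eq_abs, sq_abs]
  rw [← Real.rpow_two, Real.rpow_inv_rpow h_nonneg two_ne_zero]

lemma isLittleO_integral_sq_sub_integral_sq {α : Type*} {l : Filter α} {u v : α → Ω → ℝ}
    {g : α → ℝ} (hu : ∀ᶠ x in l, MemLp (u x) 2 μ) (hv : ∀ᶠ x in l, MemLp (v x) 2 μ)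
    (h_sub : (fun x => ∫ y, (u x y - v x y) ^ 2 ∂μ) =o[l] fun x => g x ^ 2)
    (h_bound : (fun x => ∫ y, v x y ^ 2 ∂μ) =O[l] fun x => g x ^ 2) :
    (fun x => ∫ y, u x y ^ 2 ∂μ - ∫ y, v x y ^ 2 ∂μ) =o[l] fun x => g x ^ 2 := by
  have h_sub_norm : (fun x => lpNorm (u x - v x) 2 μ) =o[l] g := by
    refine IsLittleO.of_pow (n := 2) (h_sub.congr' ?_ .rfl) two_ne_zero
    filter_upwards [hu, hv] with x hux hvx
    exact (lpNorm_two_sq (hux.sub hvx).aestronglyMeasurable).symm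
  have h_norm_sub : (fun x => lpNorm (u x) 2 μ - lpNorm (v x) 2 μ) =o[l] g := by
    refine IsBigO.trans_isLittleO (IsBigO.of_bound' ?_) h_sub_norm
    filter_upwards [hu, hv] with x hux hvx
    exact (abs_lpNorm_sub_lpNorm_le hux hvx one_le_two).trans (le_abs_self _)
  have h_bound_norm : (fun x => lpNorm (v x) 2 μ) =O[l] g := by
    refine IsBigO.of_pow two_ne_zero (h_bound.congr' ?_ .rfl)
    filter_upwards [hv] with x hvx
    exact (lpNorm_two_sq hvx.aestronglyMeasurable).symm
  refine (isLittleO_sq_sub_sq h_norm_sub h_bound_norm).congr' ?_ .rfl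
  filter_upwards [hu, hv] with x hux hvx
  rw [lpNorm_two_sq hux.aestronglyMeasurable, lpNorm_two_sq hvx.aestronglyMeasurable]

lemma integral_sum_mul_sq {ι : Type*} [Fintype ι] {f : ι → Ω → ℝ} (hf : ∀ i, MemLp (f i) 2 μ)
    (c : ι → ℝ) :
    ∫ y, (∑ i, c i * f i y) ^ 2 ∂μ = ∑ i, ∑ j, c i * (∫ y, f i y * f j y ∂μ) * c j := by
  have h_int (i j : ι) : Integrable (fun y => c i * (f i y * f j y) * c j) μ :=
    (((hf i).integrable_mul (hf j)).const_mul (c i)).mul_const (c j)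
  calc ∫ y, (∑ i, c i * f i y) ^ 2 ∂μ
      = ∫ y, ∑ i, ∑ j, c i * (f i y * f j y) * c j ∂μ := by
        simp only [sq, Finset.sum_mul_sum]
        congr! 4
        ring
    _ = ∑ i, ∑ j, c i * (∫ y, f i y * f j y ∂μ) * c j := by
        rw [integral_finsetSum _ fun i _ => integrable_finsetSum _ fun j _ => h_int i j]
        simp_rw [integral_finsetSum _ fun j _ => h_int _ j, integral_mul_const,
          integral_const_mul]

lemma memLp_two_sqrt {f : Ω → ℝ} (hf : Integrable f μ) : MemLp (fun y => √(f y)) 2 μ := by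
  have h_meas : AEStronglyMeasurable (fun y => √(f y)) μ :=
    Real.continuous_sqrt.comp_aestronglyMeasurable hf.aestronglyMeasurable
  refine (memLp_two_iff_integrable_sq h_meas).2 (hf.pos_part.congr (ae_of_all _ fun y => ?_))
  exact Real.sq_sqrt'.symm

lemma integral_sqrt_mul {a b : Ω → ℝ} (ha : Integrable a μ) (hb : Integrable b μ)
    (ha_nonneg : 0 ≤ᵐ[μ] a) (hb_nonneg : 0 ≤ᵐ[μ] b) :
    ∫ y, √(a y * b y) ∂μ
      = (∫ y, a y ∂μ + ∫ y, b y ∂μ) / 2 - (1 / 2) * ∫ y, (√(a y) - √(b y)) ^ 2 ∂μ := by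
  have h_add : Integrable (fun y => a y + b y) μ := ha.add hb
  have h_sub : Integrable (fun y => (√(a y) - √(b y)) ^ 2) μ :=
    ((memLp_two_sqrt ha).sub (memLp_two_sqrt hb)).integrable_sq
  rw [← integral_add ha hb, ← integral_div, ← integral_const_mul,
    ← integral_sub (h_add.div_const 2) (h_sub.const_mul _)]
  refine integral_congr_ae ?_
  filter_upwards [ha_nonneg, hb_nonneg] with y hay hby
  rw [Real.sqrt_mul hay]
  linear_combination (1 / 2) * Real.sq_sqrt hay + (1 / 2) * Real.sq_sqrt hby

end SquareIntegrable

section Score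

variable {Ω ι : Type*} [MeasurableSpace Ω] [Fintype ι] {ν : Measure Ω}

/-- The Fisher information matrix `∫ Λ Λᵀ p dν` of a score `Λ` under the `ν`-density `p`. -/
def fisherInfo (ν : Measure Ω) (p : Ω → ℝ) (Λ : Ω → ι → ℝ) : Matrix ι ι ℝ :=
  fun i j => ∫ y, Λ y i * Λ y j * p y ∂ν

/-- The linearization `½ √p Λᵀh` of the increment of the root density in the direction `h`,
written as a linear combination of the `L²(ν)` functions `√p Λ_i`. -/
def sqrtDeriv (p : Ω → ℝ) (Λ : Ω → ι → ℝ) (h : ι → ℝ) (y : Ω) : ℝ :=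
  ∑ i, h i / 2 * (√(p y) * Λ y i)

variable {p : Ω → ℝ} {Λ : Ω → ι → ℝ}

lemma memLp_two_sqrt_mul_score (hp_nonneg : 0 ≤ᵐ[ν] p) (hp : AEMeasurable p ν)
    (hΛ : ∀ i, AEMeasurable (fun y => Λ y i) ν)
    (hΛ_sq : Integrable (fun y => (∑ i, Λ y i ^ 2) * p y) ν) (i : ι) :
    MemLp (fun y => √(p y) * Λ y i) 2 ν := by
  have h_meas : AEMeasurable (fun y => √(p y) * Λ y i) ν := hp.sqrt.mul (hΛ i)
  refine (memLp_two_iff_integrable_sq h_meas.aestronglyMeasurable).2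
    (hΛ_sq.mono' (h_meas.pow_const 2).aestronglyMeasurable ?_)
  filter_upwards [hp_nonneg] with y hpy
  rw [Real.norm_of_nonneg (sq_nonneg _), mul_pow, Real.sq_sqrt hpy, mul_comm]
  exact mul_le_mul_of_nonneg_right
    (Finset.single_le_sum (fun j _ => sq_nonneg (Λ y j)) (Finset.mem_univ i)) hpy

lemma memLp_two_sqrtDeriv (h_score : ∀ i, MemLp (fun y => √(p y) * Λ y i) 2 ν) (h : ι → ℝ) :
    MemLp (sqrtDeriv p Λ h) 2 ν :=
  memLp_finsetSum _ fun i _ => (h_score i).const_mul (h i / 2)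

lemma integral_sqrtDeriv_sq (hp_nonneg : 0 ≤ᵐ[ν] p)
    (h_score : ∀ i, MemLp (fun y => √(p y) * Λ y i) 2 ν) (h : ι → ℝ) :
    ∫ y, sqrtDeriv p Λ h y ^ 2 ∂ν
      = (1 / 4) * ∑ i, ∑ j, h i * fisherInfo ν p Λ i j * h j := by
  have h_entry (i j : ι) :
      ∫ y, √(p y) * Λ y i * (√(p y) * Λ y j) ∂ν = fisherInfo ν p Λ i j := by
    refine integral_congr_ae ?_
    filter_upwards [hp_nonneg] with y hpy
    linear_combination Λ y i * Λ y j * Real.sq_sqrt hpy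
  simp only [sqrtDeriv, integral_sum_mul_sq h_score, h_entry, Finset.mul_sum]
  congr! 2
  ring

lemma sqErr_eq_integral_sub_sqrtDeriv (q : (ι → ℝ) → Ω → ℝ) (ϑ h : ι → ℝ) :
    sqErr ν q ϑ Λ h
      = ∫ y, (√(q (ϑ + h) y) - √(q ϑ y) - sqrtDeriv (q ϑ) Λ h y) ^ 2 ∂ν := by
  have h_sum (y : Ω) :
      sqrtDeriv (q ϑ) Λ h y = √(q ϑ y) * ((1 / 2) * ∑ i, Λ y i * h i) := by
    simp only [sqrtDeriv, Finset.mul_sum]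
    congr! 1
    ring
  simp only [sqErr, h_sum, mul_add, mul_one, sub_sub]

end Score

section Expansion

variable {Ω ι : Type*} [MeasurableSpace Ω] [Fintype ι] {ν : Measure Ω}
  {q : (ι → ℝ) → Ω → ℝ} {ϑ : ι → ℝ} {Λ : Ω → ι → ℝ}

lemma isLittleO_integral_sqrt_sub_sqrt_sq (hq : ∀ᶠ h in 𝓝 0, Integrable (q (ϑ + h)) ν)
    (hϑ_nonneg : 0 ≤ᵐ[ν] q ϑ) (hΛ : ∀ i, AEMeasurable (fun y => Λ y i) ν)
    (hL2 : IsL2Diff ν q ϑ Λ) :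
    (fun h : ι → ℝ => ∫ y, (√(q (ϑ + h) y) - √(q ϑ y)) ^ 2 ∂ν
        - (1 / 4) * ∑ i, ∑ j, h i * fisherInfo ν (q ϑ) Λ i j * h j)
      =o[𝓝 0] fun h => ‖h‖ ^ 2 := by
  obtain ⟨hΛ_sq, h_err⟩ := hL2
  have hϑ : Integrable (q ϑ) ν := by simpa only [add_zero] using hq.self_of_nhds
  have h_score := memLp_two_sqrt_mul_score hϑ_nonneg hϑ.aemeasurable hΛ hΛ_sq
  have h_bound : (fun h => ∫ y, sqrtDeriv (q ϑ) Λ h y ^ 2 ∂ν) =O[𝓝 0] fun h => ‖h‖ ^ 2 := by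
    simp only [integral_sqrtDeriv_sq hϑ_nonneg h_score]
    exact (isBigO_sum_sum_mul_mul _ _).const_mul_left _
  simp only [← integral_sqrtDeriv_sq hϑ_nonneg h_score]
  simp only [sqErr_eq_integral_sub_sqrtDeriv] at h_err
  exact isLittleO_integral_sq_sub_integral_sq
    (hq.mono fun h hqh => (memLp_two_sqrt hqh).sub (memLp_two_sqrt hϑ))
    (.of_forall (memLp_two_sqrtDeriv h_score)) h_err h_bound

theorem hellinger_expansion_general
    (hq : ∀ᶠ h in 𝓝 0, Integrable (q (ϑ + h)) ν) (hq_nonneg : ∀ᶠ h in 𝓝 0, 0 ≤ᵐ[ν] q (ϑ + h))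
    (hΛ : ∀ i, AEMeasurable (fun y => Λ y i) ν) (hL2 : IsL2Diff ν q ϑ Λ) :
    ((fun h : ι → ℝ => ∫ y, (√(q (ϑ + h) y) - √(q ϑ y)) ^ 2 ∂ν
        - (1 / 4) * ∑ i, ∑ j, h i * fisherInfo ν (q ϑ) Λ i j * h j)
      =o[𝓝 0] fun h => ‖h‖ ^ 2) ∧
    ((fun h : ι → ℝ => ∫ y, √(q (ϑ + h) y * q ϑ y) ∂ν
        - ((∫ y, q (ϑ + h) y ∂ν + ∫ y, q ϑ y ∂ν) / 2
          - (1 / 8) * ∑ i, ∑ j, h i * fisherInfo ν (q ϑ) Λ i j * h j))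
      =o[𝓝 0] fun h => ‖h‖ ^ 2) := by
  have hϑ : Integrable (q ϑ) ν := by simpa only [add_zero] using hq.self_of_nhds
  have hϑ_nonneg : 0 ≤ᵐ[ν] q ϑ := by simpa only [add_zero] using hq_nonneg.self_of_nhds
  have h_dist := isLittleO_integral_sqrt_sub_sqrt_sq hq hϑ_nonneg hΛ hL2
  refine ⟨h_dist, (h_dist.const_mul_left (-(1 / 2))).congr' ?_ .rfl⟩
  filter_upwards [hq, hq_nonneg] with h hqh hqh_nonneg
  rw [integral_sqrt_mul hqh hϑ hqh_nonneg hϑ_nonneg]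
  ring

end Expansion

/-- **Hellinger expansion under `L₂` differentiability.** If the dominated
parametric family with `ν`-probability-densities `q ϑ'` (`ϑ' ∈ Θ`, `Θ` open) is
`L₂` differentiable at `ϑ ∈ Θ` with `L₂` derivative `Λ` and Fisher information
`I_ϑ = ∫ Λ Λᵀ dQ_ϑ`, then
`∫ (√(dQ_{ϑ+h}) - √(dQ_ϑ))² dν = ¼ hᵀ I_ϑ h + o(|h|²)` and, equivalently,
`∫ √(dQ_{ϑ+h} dQ_ϑ) dν = 1 - ⅛ hᵀ I_ϑ h + o(|h|²)` as `h → 0`. -/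
theorem hellinger_expansion
    {Ωs : Type*} [MeasurableSpace Ωs] {k : ℕ}
    (ν : Measure Ωs)
    (Θ : Set (Fin k → ℝ)) (hΘ : IsOpen Θ)
    (q : (Fin k → ℝ) → Ωs → ℝ)
    (hqmeas : ∀ ϑ' ∈ Θ, Measurable (q ϑ'))
    (hqpos : ∀ ϑ' ∈ Θ, ∀ y, 0 ≤ q ϑ' y)
    (hqprob : ∀ ϑ' ∈ Θ, ∫ y, q ϑ' y ∂ν = 1)
    (ϑ : Fin k → ℝ) (hϑ : ϑ ∈ Θ)
    (Λ : Ωs → Fin k → ℝ)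
    (hΛmeas : ∀ i, Measurable fun y => Λ y i)
    (hL2 : IsL2Diff ν q ϑ Λ) :
    ((fun h : Fin k → ℝ =>
        (∫ y, (Real.sqrt (q (ϑ + h) y) - Real.sqrt (q ϑ y)) ^ 2 ∂ν) -
          (1 / 4) * ∑ i, ∑ j, h i * (∫ y, Λ y i * Λ y j * q ϑ y ∂ν) * h j)
      =o[𝓝 0] fun h => ‖h‖ ^ 2) ∧
    ((fun h : Fin k → ℝ =>
        (∫ y, Real.sqrt (q (ϑ + h) y * q ϑ y) ∂ν) -
          (1 - (1 / 8) * ∑ i, ∑ j, h i * (∫ y, Λ y i * Λ y j * q ϑ y ∂ν) * h j))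
      =o[𝓝 0] fun h => ‖h‖ ^ 2) := by
  have h_mem : ∀ᶠ h in 𝓝 0, ϑ + h ∈ Θ :=
    (continuous_const_add ϑ).continuousAt.eventually_mem
      (by simpa only [add_zero] using hΘ.mem_nhds hϑ)
  obtain ⟨h_dist, h_affinity⟩ := hellinger_expansion_general
    (h_mem.mono fun h hh => integrable_of_integral_eq_one (hqprob _ hh))
    (h_mem.mono fun h hh => ae_of_all _ (hqpos _ hh)) (fun i => (hΛmeas i).aemeasurable) hL2
  refine ⟨h_dist, h_affinity.congr' ?_ .rfl⟩
  filter_upwards [h_mem] with h hh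
  rw [hqprob _ hh, hqprob _ hϑ, add_self_div_two]
  rfl
end
end

section
/- Integrated Fisher information bound along a segment: Let ϑ, ϑ + h ∈ Θ and suppose that for ν-a.e. y the map u ↦ dQ_{ϑ+uh}(y) is absolutely continuous on [0,1] with derivative (d/du) dQ_{ϑ+uh}(y) = (Λ_{ϑ+uh}(y)ᵀ h) dQ_{ϑ+uh}(y) for Lebesgue-a.e. u, where I_{ϑ+uh} = ∫ Λ_{ϑ+uh} Λ_{ϑ+uh}ᵀ dQ_{ϑ+uh} is finite for each u. Then ∫ (√(dQ_{ϑ+h}) − √(dQ_ϑ))² dν ≤ ¼ ∫₀¹ hᵀ I_{ϑ+uh} h du. -/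
open MeasureTheory

noncomputable section

/-!
For fixed `y`, the path `u ↦ √(q u y)` formally has derivative `ℓ u y * √(q u y) / 2`, where `ℓ` is
the score, so Cauchy–Schwarz in `u` bounds `(√(q b y) - √(q a y))²` by
`(b - a) / 4 * ∫ u in a..b, ℓ u y ^ 2 * q u y`; integrating in `y` and exchanging the integrals
gives the claim. As the square root is singular at `0`, the pathwise bound is proved for
`√(q u y + ε)` first, and then `ε → 0`.
-/

section AbsoluteContinuity

open Set

variable {a b : ℝ}

lemma absolutelyContinuousOnInterval_of_dist_le {X Y : Type*} [PseudoMetricSpace X]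
    [PseudoMetricSpace Y] {f : ℝ → X} {g : ℝ → Y} {C : ℝ}
    (hf : AbsolutelyContinuousOnInterval f a b)
    (hdist : ∀ x ∈ uIcc a b, ∀ y ∈ uIcc a b, dist (g x) (g y) ≤ C * dist (f x) (f y)) :
    AbsolutelyContinuousOnInterval g a b := by
  have hC := Filter.Tendsto.const_mul C hf
  rw [mul_zero] at hC
  refine squeeze_zero' (.of_forall fun E ↦ Finset.sum_nonneg fun i _ ↦ dist_nonneg) ?_ hC
  refine Filter.Eventually.filter_mono inf_le_right (Filter.eventually_principal.2 fun E hE ↦ ?_)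
  rw [Finset.mul_sum]
  exact Finset.sum_le_sum fun i hi ↦ hdist _ (hE.1 i hi).1 _ (hE.1 i hi).2

lemma absolutelyContinuousOnInterval_of_eq_add_integral {f f' : ℝ → ℝ} (hab : a ≤ b)
    (hf' : IntegrableOn f' (Icc a b))
    (hf : ∀ s ∈ Icc a b, f s = f a + ∫ u in a..s, f' u) :
    AbsolutelyContinuousOnInterval f a b := by
  have hf'_int : IntervalIntegrable f' volume a b :=
    (intervalIntegrable_iff_integrableOn_Icc_of_le hab).2 hf'
  refine absolutelyContinuousOnInterval_of_dist_le (C := 1)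
    (hf'_int.absolutelyContinuousOnInterval_intervalIntegral left_mem_uIcc) fun x hx y hy ↦ ?_
  rw [uIcc_of_le hab] at hx hy
  rw [hf x hx, hf y hy, dist_add_left, one_mul]

lemma ae_hasDerivAt_of_eq_add_integral {E : Type*} [NormedAddCommGroup E] [NormedSpace ℝ E]
    [CompleteSpace E] {f f' : ℝ → E} (hf' : IntegrableOn f' (Icc a b))
    (hf : ∀ s ∈ Icc a b, f s = f a + ∫ u in a..s, f' u) :
    ∀ᵐ u ∂volume.restrict (Icc a b), HasDerivAt f (f' u) u := by
  rw [← restrict_Ioo_eq_restrict_Icc, ae_restrict_iff' measurableSet_Ioo]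
  rcases le_total a b with hab | hba
  · have hf'_int : IntervalIntegrable f' volume a b :=
      (intervalIntegrable_iff_integrableOn_Icc_of_le hab).2 hf'
    filter_upwards [hf'_int.ae_hasDerivAt_integral] with u hu hu_mem
    have hprim := (hu (uIcc_of_le hab ▸ Ioo_subset_Icc_self hu_mem) a left_mem_uIcc).const_add (f a)
    refine hprim.congr_of_eventuallyEq ?_
    filter_upwards [Icc_mem_nhds hu_mem.1 hu_mem.2] with s hs using hf s hs
  · simp [Ioo_eq_empty_of_le hba]

lemma sq_lintegral_le_measure_univ_mul_lintegral_sq {α : Type*} [MeasurableSpace α]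
    {μ : Measure α} {f : α → ENNReal} (hf : AEMeasurable f μ) :
    (∫⁻ x, f x ∂μ) ^ 2 ≤ μ univ * ∫⁻ x, f x ^ 2 ∂μ := by
  have holder := ENNReal.lintegral_mul_le_Lp_mul_Lq μ Real.HolderConjugate.two_two
    (aemeasurable_const (b := (1 : ENNReal))) hf
  simp only [Pi.mul_apply, one_mul, ENNReal.rpow_two, one_pow, lintegral_one] at holder
  calc (∫⁻ x, f x ∂μ) ^ 2
      ≤ (μ univ ^ (1 / 2 : ℝ) * (∫⁻ x, f x ^ 2 ∂μ) ^ (1 / 2 : ℝ)) ^ 2 := by gcongr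
    _ = μ univ * ∫⁻ x, f x ^ 2 ∂μ := by
      rw [mul_pow, ← ENNReal.rpow_mul_natCast, ← ENNReal.rpow_mul_natCast]
      norm_num

lemma enorm_sub_sq_le_lintegral_enorm_deriv_sq {f : ℝ → ℝ} (hab : a ≤ b)
    (hf : AbsolutelyContinuousOnInterval f a b) :
    ‖f b - f a‖ₑ ^ 2 ≤ ENNReal.ofReal (b - a) * ∫⁻ u in Icc a b, ‖deriv f u‖ₑ ^ 2 := by
  calc ‖f b - f a‖ₑ ^ 2
      = ‖∫ u in Icc a b, deriv f u‖ₑ ^ 2 := by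
        rw [← hf.integral_deriv_eq_sub, intervalIntegral.integral_of_le hab,
          integral_Icc_eq_integral_Ioc]
    _ ≤ (∫⁻ u in Icc a b, ‖deriv f u‖ₑ) ^ 2 := by
        gcongr
        exact enorm_integral_le_lintegral_enorm _
    _ ≤ volume.restrict (Icc a b) univ * ∫⁻ u in Icc a b, ‖deriv f u‖ₑ ^ 2 :=
        sq_lintegral_le_measure_univ_mul_lintegral_sq (measurable_deriv f).enorm.aemeasurable
    _ = ENNReal.ofReal (b - a) * ∫⁻ u in Icc a b, ‖deriv f u‖ₑ ^ 2 := by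
        rw [Measure.restrict_apply_univ, Real.volume_Icc]

end AbsoluteContinuity

section SqrtPath

open Set

lemma dist_sqrt_le_inv_sqrt_mul_dist {ε x y : ℝ} (hε : 0 < ε) (hx : ε ≤ x) (hy : 0 ≤ y) :
    dist √x √y ≤ (√ε)⁻¹ * dist x y := by
  have hfactor : x - y = (√x - √y) * (√x + √y) := by
    linear_combination -Real.sq_sqrt (hε.le.trans hx) + Real.sq_sqrt hy
  rw [Real.dist_eq, Real.dist_eq, le_inv_mul_iff₀ (Real.sqrt_pos.2 hε), hfactor, abs_mul, mul_comm,
    abs_of_nonneg (by positivity : 0 ≤ √x + √y)]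
  gcongr
  exact (Real.sqrt_le_sqrt hx).trans (le_add_of_nonneg_right (Real.sqrt_nonneg y))

lemma sq_mul_div_two_sqrt_add_le {x ε : ℝ} (hx : 0 ≤ x) (hε : 0 < ε) (r : ℝ) :
    (r * x / (2 * √(x + ε))) ^ 2 ≤ 1 / 4 * (r ^ 2 * x) := by
  rw [div_pow, mul_pow 2, Real.sq_sqrt (by positivity), div_le_iff₀ (by positivity)]
  nlinarith [mul_nonneg (mul_nonneg (sq_nonneg r) hx) hε.le]

variable {a b : ℝ} {F ℓ : ℝ → ℝ}

lemma enorm_sqrt_add_sub_sqrt_add_sq_le {ε : ℝ} (hε : 0 < ε) (hab : a ≤ b)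
    (hF : AbsolutelyContinuousOnInterval F a b) (hF_nonneg : ∀ u ∈ Icc a b, 0 ≤ F u)
    (hF_deriv : ∀ᵐ u ∂volume.restrict (Icc a b), HasDerivAt F (ℓ u * F u) u) :
    ‖√(F b + ε) - √(F a + ε)‖ₑ ^ 2 ≤
      ENNReal.ofReal ((b - a) / 4) * ∫⁻ u in Icc a b, ENNReal.ofReal (ℓ u ^ 2 * F u) := by
  have hsqrt_ac : AbsolutelyContinuousOnInterval (fun u ↦ √(F u + ε)) a b := by
    refine absolutelyContinuousOnInterval_of_dist_le (C := (√ε)⁻¹) hF fun x hx y hy ↦ ?_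
    rw [uIcc_of_le hab] at hx hy
    rw [← dist_add_right (F x) (F y) ε]
    exact dist_sqrt_le_inv_sqrt_mul_dist hε (le_add_of_nonneg_left (hF_nonneg x hx))
      (add_nonneg (hF_nonneg y hy) hε.le)
  have hderiv_sq : ∀ᵐ u ∂volume.restrict (Icc a b),
      ‖deriv (fun u ↦ √(F u + ε)) u‖ₑ ^ 2 ≤
        ENNReal.ofReal (1 / 4) * ENNReal.ofReal (ℓ u ^ 2 * F u) := by
    filter_upwards [hF_deriv, ae_restrict_mem measurableSet_Icc] with u hu hu_mem
    have hFu := hF_nonneg u hu_mem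
    rw [((hu.add_const ε).sqrt (by positivity)).deriv, ← ENNReal.ofReal_mul (by norm_num),
      ← enorm_pow, Real.enorm_of_nonneg (sq_nonneg _)]
    exact ENNReal.ofReal_le_ofReal (sq_mul_div_two_sqrt_add_le hFu hε (ℓ u))
  calc ‖√(F b + ε) - √(F a + ε)‖ₑ ^ 2
      ≤ ENNReal.ofReal (b - a) * ∫⁻ u in Icc a b, ‖deriv (fun u ↦ √(F u + ε)) u‖ₑ ^ 2 :=
        enorm_sub_sq_le_lintegral_enorm_deriv_sq hab hsqrt_ac
    _ ≤ ENNReal.ofReal (b - a) *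
          ∫⁻ u in Icc a b, ENNReal.ofReal (1 / 4) * ENNReal.ofReal (ℓ u ^ 2 * F u) := by
        gcongr ENNReal.ofReal (b - a) * ?_
        exact lintegral_mono_ae hderiv_sq
    _ = ENNReal.ofReal ((b - a) / 4) * ∫⁻ u in Icc a b, ENNReal.ofReal (ℓ u ^ 2 * F u) := by
        rw [lintegral_const_mul' _ _ ENNReal.ofReal_ne_top, ← mul_assoc,
          ← ENNReal.ofReal_mul (sub_nonneg.2 hab), mul_one_div]

lemma enorm_sqrt_sub_sqrt_sq_le (hab : a ≤ b) (hF : AbsolutelyContinuousOnInterval F a b)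
    (hF_nonneg : ∀ u ∈ Icc a b, 0 ≤ F u)
    (hF_deriv : ∀ᵐ u ∂volume.restrict (Icc a b), HasDerivAt F (ℓ u * F u) u) :
    ‖√(F b) - √(F a)‖ₑ ^ 2 ≤
      ENNReal.ofReal ((b - a) / 4) * ∫⁻ u in Icc a b, ENNReal.ofReal (ℓ u ^ 2 * F u) := by
  have hcont : Continuous fun ε : ℝ ↦ ‖√(F b + ε) - √(F a + ε)‖ₑ ^ 2 := by fun_prop
  have hlim := (hcont.tendsto 0).mono_left (nhdsWithin_le_nhds (s := Ioi 0))
  simp only [add_zero] at hlim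
  refine le_of_tendsto hlim ?_
  filter_upwards [self_mem_nhdsWithin] with ε hε
  exact enorm_sqrt_add_sub_sqrt_add_sq_le hε hab hF hF_nonneg hF_deriv

end SqrtPath

section DominatedPath

open Set

variable {Ω : Type*} [MeasurableSpace Ω]

lemma stronglyMeasurable_intervalIntegral_prod {E : Type*} [NormedAddCommGroup E]
    [NormedSpace ℝ E] {μ : Measure ℝ} [SFinite μ] {g : ℝ × Ω → E} (hg : StronglyMeasurable g)
    (a : ℝ) : StronglyMeasurable fun p : ℝ × Ω ↦ ∫ u in a..p.1, g (u, p.2) ∂μ := by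
  have hIoc {l r : ℝ × Ω → ℝ} (hl : Measurable l) (hr : Measurable r) :
      StronglyMeasurable fun p ↦ ∫ u in Ioc (l p) (r p), g (u, p.2) ∂μ := by
    have hset : MeasurableSet {z : (ℝ × Ω) × ℝ | z.2 ∈ Ioc (l z.1) (r z.1)} :=
      (measurableSet_lt (hl.comp measurable_fst) measurable_snd).inter
        (measurableSet_le measurable_snd (hr.comp measurable_fst))
    have hg_swap : StronglyMeasurable fun z : (ℝ × Ω) × ℝ ↦ g (z.2, z.1.2) :=
      hg.comp_measurable (by fun_prop)
    simp_rw [← integral_indicator measurableSet_Ioc]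
    exact (hg_swap.indicator hset).integral_prod_right' (ν := μ)
  exact (hIoc measurable_const measurable_fst).sub (hIoc measurable_fst measurable_const)

variable {ν : Measure Ω} {q ℓ : ℝ → Ω → ℝ} {a b : ℝ}

lemma aemeasurable_score_sq_mul_density [SFinite ν] (hqa : AEMeasurable (q a) ν)
    (hℓq : Measurable fun p : ℝ × Ω ↦ ℓ p.1 p.2 * q p.1 p.2)
    (hq_eq : ∀ᵐ y ∂ν, ∀ s ∈ Icc a b, q s y = q a y + ∫ u in a..s, ℓ u y * q u y) :
    AEMeasurable (fun p : ℝ × Ω ↦ ℓ p.1 p.2 ^ 2 * q p.1 p.2)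
      ((volume.restrict (Icc a b)).prod ν) := by
  -- `q` need not be jointly measurable, but on `[a, b]` it agrees with the primitive of `ℓ * q`,
  -- and `ℓ ^ 2 * q = (ℓ * q) ^ 2 / q` also where `q` vanishes, as `0 / 0 = 0`.
  have hprim : AEMeasurable (fun p : ℝ × Ω ↦ q a p.2 + ∫ u in a..p.1, ℓ u p.2 * q u p.2)
      ((volume.restrict (Icc a b)).prod ν) :=
    (hqa.comp_quasiMeasurePreserving Measure.quasiMeasurePreserving_snd).add
      (stronglyMeasurable_intervalIntegral_prod hℓq.stronglyMeasurable a).measurable.aemeasurable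
  refine ((hℓq.pow_const 2).aemeasurable.div hprim).congr ?_
  filter_upwards [Measure.quasiMeasurePreserving_snd.ae hq_eq,
    Measure.quasiMeasurePreserving_fst.ae (ae_restrict_mem measurableSet_Icc)] with p hp hp_mem
  rw [Pi.div_apply, ← hp p.1 hp_mem]
  rcases eq_or_ne (q p.1 p.2) 0 with hq0 | hq0
  · simp [hq0]
  · field_simp

lemma lintegral_enorm_sqrt_sub_sqrt_sq_le [SFinite ν] (hab : a ≤ b)
    (hq_nonneg : ∀ᵐ y ∂ν, ∀ u ∈ Icc a b, 0 ≤ q u y) (hqa : AEMeasurable (q a) ν)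
    (hℓq : Measurable fun p : ℝ × Ω ↦ ℓ p.1 p.2 * q p.1 p.2)
    (hq_ac : ∀ᵐ y ∂ν, IntegrableOn (fun u ↦ ℓ u y * q u y) (Icc a b) ∧
      ∀ s ∈ Icc a b, q s y = q a y + ∫ u in a..s, ℓ u y * q u y) :
    ∫⁻ y, ‖√(q b y) - √(q a y)‖ₑ ^ 2 ∂ν ≤ ENNReal.ofReal ((b - a) / 4) *
      ∫⁻ u in Icc a b, ∫⁻ y, ENNReal.ofReal (ℓ u y ^ 2 * q u y) ∂ν := by
  have hpath : ∀ᵐ y ∂ν, ‖√(q b y) - √(q a y)‖ₑ ^ 2 ≤ ENNReal.ofReal ((b - a) / 4) *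
      ∫⁻ u in Icc a b, ENNReal.ofReal (ℓ u y ^ 2 * q u y) := by
    filter_upwards [hq_nonneg, hq_ac] with y hy_nonneg ⟨hy_int, hy_eq⟩
    exact enorm_sqrt_sub_sqrt_sq_le (F := (q · y)) (ℓ := (ℓ · y)) hab
      (absolutelyContinuousOnInterval_of_eq_add_integral hab hy_int hy_eq) hy_nonneg
      (ae_hasDerivAt_of_eq_add_integral hy_int hy_eq)
  have hmeas := aemeasurable_score_sq_mul_density hqa hℓq (hq_ac.mono fun y hy ↦ hy.2)
  calc ∫⁻ y, ‖√(q b y) - √(q a y)‖ₑ ^ 2 ∂ν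
      ≤ ∫⁻ y, ENNReal.ofReal ((b - a) / 4) *
          (∫⁻ u in Icc a b, ENNReal.ofReal (ℓ u y ^ 2 * q u y)) ∂ν := lintegral_mono_ae hpath
    _ = ENNReal.ofReal ((b - a) / 4) *
          ∫⁻ y, (∫⁻ u in Icc a b, ENNReal.ofReal (ℓ u y ^ 2 * q u y)) ∂ν :=
        lintegral_const_mul' _ _ ENNReal.ofReal_ne_top
    _ = ENNReal.ofReal ((b - a) / 4) *
          ∫⁻ u in Icc a b, ∫⁻ y, ENNReal.ofReal (ℓ u y ^ 2 * q u y) ∂ν := by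
        rw [lintegral_lintegral_swap (f := fun u y ↦ ENNReal.ofReal (ℓ u y ^ 2 * q u y))
          hmeas.ennreal_ofReal]

theorem integrated_fisher_information_bound_general [SFinite ν] (hab : a ≤ b)
    (hq_nonneg : ∀ᵐ y ∂ν, ∀ u ∈ Icc a b, 0 ≤ q u y) (hqa : AEMeasurable (q a) ν)
    (hℓq : Measurable fun p : ℝ × Ω ↦ ℓ p.1 p.2 * q p.1 p.2)
    (hq_ac : ∀ᵐ y ∂ν, IntegrableOn (fun u ↦ ℓ u y * q u y) (Icc a b) ∧
      ∀ s ∈ Icc a b, q s y = q a y + ∫ u in a..s, ℓ u y * q u y)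
    (hfisher : ∀ᵐ u ∂volume.restrict (Icc a b), Integrable (fun y ↦ ℓ u y ^ 2 * q u y) ν)
    (hfisher_int : IntegrableOn (fun u ↦ ∫ y, ℓ u y ^ 2 * q u y ∂ν) (Icc a b)) :
    ∫ y, (√(q b y) - √(q a y)) ^ 2 ∂ν ≤
      (b - a) / 4 * ∫ u in Icc a b, ∫ y, ℓ u y ^ 2 * q u y ∂ν := by
  have hterm_nonneg : ∀ u ∈ Icc a b, 0 ≤ᵐ[ν] fun y ↦ ℓ u y ^ 2 * q u y := fun u hu ↦
    hq_nonneg.mono fun y hy ↦ mul_nonneg (sq_nonneg _) (hy u hu)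
  have hfisher_nonneg : 0 ≤ᵐ[volume.restrict (Icc a b)] fun u ↦ ∫ y, ℓ u y ^ 2 * q u y ∂ν :=
    (ae_restrict_mem measurableSet_Icc).mono fun u hu ↦ integral_nonneg_of_ae (hterm_nonneg u hu)
  have hfisher_lintegral : ∫⁻ u in Icc a b, ∫⁻ y, ENNReal.ofReal (ℓ u y ^ 2 * q u y) ∂ν =
      ENNReal.ofReal (∫ u in Icc a b, ∫ y, ℓ u y ^ 2 * q u y ∂ν) := by
    rw [ofReal_integral_eq_lintegral_ofReal hfisher_int hfisher_nonneg]
    refine lintegral_congr_ae ?_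
    filter_upwards [hfisher, ae_restrict_mem measurableSet_Icc] with u hu hu_mem
    exact (ofReal_integral_eq_lintegral_ofReal hu (hterm_nonneg u hu_mem)).symm
  have hlength : 0 ≤ (b - a) / 4 := by linarith
  rw [← ENNReal.ofReal_le_ofReal_iff (mul_nonneg hlength (integral_nonneg_of_ae hfisher_nonneg))]
  calc ENNReal.ofReal (∫ y, (√(q b y) - √(q a y)) ^ 2 ∂ν)
      ≤ ∫⁻ y, ‖√(q b y) - √(q a y)‖ₑ ^ 2 ∂ν := by
        rw [← Real.enorm_of_nonneg (integral_nonneg fun y ↦ sq_nonneg _)]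
        simp_rw [← enorm_pow]
        exact enorm_integral_le_lintegral_enorm _
    _ ≤ ENNReal.ofReal ((b - a) / 4) *
          ∫⁻ u in Icc a b, ∫⁻ y, ENNReal.ofReal (ℓ u y ^ 2 * q u y) ∂ν :=
        lintegral_enorm_sqrt_sub_sqrt_sq_le hab hq_nonneg hqa hℓq hq_ac
    _ = ENNReal.ofReal ((b - a) / 4 * ∫ u in Icc a b, ∫ y, ℓ u y ^ 2 * q u y ∂ν) := by
        rw [hfisher_lintegral, ENNReal.ofReal_mul hlength]

end DominatedPath

/-- **Integrated Fisher information bound along a segment.**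
Suppose that for `ν`-a.e. `y` the map `u ↦ dQ_{ϑ+uh}(y)` is absolutely continuous on
`[0,1]` with derivative `(Λ_{ϑ+uh}ᵀ h) dQ_{ϑ+uh}` for a.e. `u` (expressed through the
fundamental theorem of calculus), and that the quadratic forms
`hᵀ I_{ϑ+uh} h = ∫ (Λ_{ϑ+uh}ᵀ h)² dQ_{ϑ+uh}` are finite for each `u` and integrable in `u`.
Then `∫ (√(dQ_{ϑ+h}) - √(dQ_ϑ))² dν ≤ ¼ ∫₀¹ hᵀ I_{ϑ+uh} h du`. -/
theorem integrated_fisher_information_bound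
    {Ωs : Type*} [MeasurableSpace Ωs] {k : ℕ}
    (ν : Measure Ωs) [SigmaFinite ν]
    (q : (Fin k → ℝ) → Ωs → ℝ)
    (hqpos : ∀ ϑ' y, 0 ≤ q ϑ' y)
    (Λ : (Fin k → ℝ) → Ωs → Fin k → ℝ)
    (ϑ h : Fin k → ℝ)
    (hqmeas : ∀ u : ℝ, Measurable (q (ϑ + u • h)))
    (hjm : Measurable fun p : ℝ × Ωs =>
        (∑ i, Λ (ϑ + p.1 • h) p.2 i * h i) * q (ϑ + p.1 • h) p.2)
    -- absolute continuity of `u ↦ dQ_{ϑ+uh}(y)` on `[0,1]` with the indicated derivative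
    (hAC : ∀ᵐ y ∂ν,
        IntegrableOn (fun u : ℝ => (∑ i, Λ (ϑ + u • h) y i * h i) * q (ϑ + u • h) y)
          (Set.Icc 0 1) ∧
        ∀ s ∈ Set.Icc (0 : ℝ) 1,
          q (ϑ + s • h) y =
            q ϑ y + ∫ u in (0 : ℝ)..s, (∑ i, Λ (ϑ + u • h) y i * h i) * q (ϑ + u • h) y)
    -- the Fisher information `I_{ϑ+uh}` exists (is finite) for each `u`
    (hfin : ∀ u ∈ Set.Icc (0 : ℝ) 1,
        Integrable (fun y => (∑ i, Λ (ϑ + u • h) y i * h i) ^ 2 * q (ϑ + u • h) y) ν)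
    (hint : IntegrableOn
        (fun u : ℝ => ∫ y, (∑ i, Λ (ϑ + u • h) y i * h i) ^ 2 * q (ϑ + u • h) y ∂ν)
        (Set.Icc 0 1)) :
    ∫ y, (Real.sqrt (q (ϑ + h) y) - Real.sqrt (q ϑ y)) ^ 2 ∂ν ≤
      (1 / 4) * ∫ u in Set.Icc (0 : ℝ) 1,
        ∫ y, (∑ i, Λ (ϑ + u • h) y i * h i) ^ 2 * q (ϑ + u • h) y ∂ν := by
  simpa using integrated_fisher_information_bound_general (q := fun u ↦ q (ϑ + u • h))
    (ℓ := fun u y ↦ ∑ i, Λ (ϑ + u • h) y i * h i) zero_le_one (.of_forall fun y u _ ↦ hqpos _ y)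
    (hqmeas 0).aemeasurable hjm (by simpa using hAC)
    ((ae_restrict_mem measurableSet_Icc).mono hfin) hint
end
end

section
/- Linear regression with stochastic regressors: Let F be a probability measure on (ℝ, 𝔅) with finite Fisher information of location, i.e. sup_φ (∫ φ′(y) F(dy))² / ∫ φ(y)² F(dy) < ∞ where φ ranges over all continuously differentiable functions ℝ → ℝ with compact support (and ∫ φ² dF > 0), and let K be a probability measure on ℝ^p with ∫ |x|² K(dx) < ∞. Then the linear regression model P = {P_β(dx, dy) = F(dy − xᵀβ) K(dx) : β ∈ ℝ^p} is continuously L₂ differentiable at every β ∈ ℝ^p. -/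
open MeasureTheory Filter Topology

noncomputable section

/-!
Finite Fisher information says that `φ ↦ ∫ φ' dF` is bounded for the `L²(F)` norm, so the Riesz
representation theorem yields a score `Λ ∈ L²(F)` with `F' = -Λ F` in the sense of distributions.
The tail integral `y ↦ ∫_{(y, ∞)} Λ dF` has the same distributional derivative, hence is, up to a
constant, a density `f` of `F`; thus `f` is absolutely continuous with `f' = -Λ f`. Passing to the
limit `ε → 0` in the chain rule for `√(f + ε)` shows that `√f` is locally absolutely continuous
with `(√f)' = -½ Λ √f ∈ L²`.

Write `r = (√f)'`. The remainder of the expansion of `√f` under translation by `t` has squared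
`L²` norm at most `t²` times the average of `‖r(· - tu) - r‖²` over `u ∈ [0, 1]`. For the
regression model `t = xᵀh` with `(xᵀh)² ≤ C ‖h‖² ‖x‖²`; continuity of translations in `L²` and
dominated convergence with respect to `K`, with dominating function a multiple of `‖x‖²`, give
differentiability, and the same two facts applied to `Λ √f` give continuity of the derivative.
-/

section L2

variable {α : Type*} [MeasurableSpace α] {μ : Measure α} {f : α → ℝ}

theorem norm_toLp_two_sq (hf : MemLp f 2 μ) : ‖hf.toLp f‖ ^ 2 = ∫ x, f x ^ 2 ∂μ := by
  rw [← real_inner_self_eq_norm_sq, L2.inner_def]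
  refine integral_congr_ae ?_
  filter_upwards [hf.coeFn_toLp] with x hx
  rw [hx, real_inner_self_eq_norm_sq, Real.norm_eq_abs, sq_abs]

end L2

section WeakScore

/-- `Λ` is a score of the location family generated by `μ` in the distributional sense,
`μ' = -Λ μ`. For `μ = f dy` with smooth `f > 0` it is `-f' / f`. -/
def IsWeakScore (μ : Measure ℝ) (Λ : ℝ → ℝ) : Prop :=
  ∀ φ : ℝ → ℝ, ContDiff ℝ 1 φ → HasCompactSupport φ →
    ∫ y, deriv φ y ∂μ = ∫ y, Λ y * φ y ∂μ

/-- The space of compactly supported `C¹` functions on the line. -/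
def testFunctions : Submodule ℝ (ℝ → ℝ) where
  carrier := {φ | ContDiff ℝ 1 φ ∧ HasCompactSupport φ}
  add_mem' hφ hψ := ⟨hφ.1.add hψ.1, hφ.2.add hψ.2⟩
  zero_mem' := ⟨contDiff_const, .zero⟩
  smul_mem' c _ hφ := ⟨hφ.1.const_smul c, hφ.2.smul_left (f := fun _ => c)⟩

variable (μ : Measure ℝ) [IsFiniteMeasureOnCompacts μ]

theorem memLp_testFunction (φ : testFunctions) : MemLp φ.1 2 μ :=
  φ.2.1.continuous.memLp_of_hasCompactSupport φ.2.2

theorem integrable_deriv_testFunction (φ : testFunctions) : Integrable (deriv φ.1) μ :=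
  (φ.2.1.continuous_deriv le_rfl).integrable_of_hasCompactSupport φ.2.2.deriv

/-- The embedding of test functions into `L²(μ)`; it need not be injective. -/
def testFunctionsToL2 : testFunctions →ₗ[ℝ] Lp ℝ 2 μ where
  toFun φ := (memLp_testFunction μ φ).toLp φ.1
  map_add' _ _ := rfl
  map_smul' _ _ := rfl

/-- The linear functional `φ ↦ ∫ φ' dμ`, the distributional derivative of `μ` up to sign. -/
def integralDeriv : testFunctions →ₗ[ℝ] ℝ where
  toFun φ := ∫ y, deriv φ.1 y ∂μ
  map_add' φ ψ := by
    rw [← integral_add (integrable_deriv_testFunction μ φ) (integrable_deriv_testFunction μ ψ)]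
    congr with y
    exact deriv_add (φ.2.1.differentiable one_ne_zero y) (ψ.2.1.differentiable one_ne_zero y)
  map_smul' c φ := by
    rw [RingHom.id_apply, ← integral_smul]
    congr with y
    exact deriv_const_smul c (φ.2.1.differentiable one_ne_zero y)

theorem coeFn_testFunctionsToL2 (φ : testFunctions) : testFunctionsToL2 μ φ =ᵐ[μ] φ.1 :=
  (memLp_testFunction μ φ).coeFn_toLp

theorem denseRange_testFunctionsToL2 : DenseRange (testFunctionsToL2 μ) := by
  refine (Lp.dense_hasCompactSupport_contDiff (by simp)).mono ?_
  rintro u ⟨φ, huφ, hsupp, hsmooth⟩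
  refine ⟨⟨φ, hsmooth.of_le (by norm_cast), hsupp⟩, Lp.ext ?_⟩
  exact (coeFn_testFunctionsToL2 μ _).trans huφ.symm

variable {μ}

theorem exists_isWeakScore
    (hFisher : ∃ C : ℝ, ∀ φ : ℝ → ℝ, ContDiff ℝ 1 φ → HasCompactSupport φ →
      (∫ y, deriv φ y ∂μ) ^ 2 ≤ C * ∫ y, φ y ^ 2 ∂μ) :
    ∃ Λ : ℝ → ℝ, Measurable Λ ∧ MemLp Λ 2 μ ∧ IsWeakScore μ Λ := by
  obtain ⟨C, hC⟩ := hFisher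
  have hbound (φ : testFunctions) : ‖integralDeriv μ φ‖ ≤ √C * ‖testFunctionsToL2 μ φ‖ := by
    have hnorm : ‖testFunctionsToL2 μ φ‖ ^ 2 = ∫ y, φ.1 y ^ 2 ∂μ :=
      norm_toLp_two_sq (memLp_testFunction μ φ)
    rw [← Real.sqrt_sq (norm_nonneg (testFunctionsToL2 μ φ)),
      ← Real.sqrt_mul' C (sq_nonneg _), hnorm]
    exact Real.abs_le_sqrt (hC φ.1 φ.2.1 φ.2.2)
  let T := (integralDeriv μ).extendOfNorm (testFunctionsToL2 μ)
  let Λ := (InnerProductSpace.toDual ℝ (Lp ℝ 2 μ)).symm T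
  refine ⟨Λ, (Lp.stronglyMeasurable Λ).measurable, Lp.memLp Λ, fun φ hφ hsupp => ?_⟩
  calc ∫ y, deriv φ y ∂μ
      = T (testFunctionsToL2 μ ⟨φ, hφ, hsupp⟩) :=
        (LinearMap.extendOfNorm_eq (denseRange_testFunctionsToL2 μ) ⟨√C, hbound⟩
          ⟨φ, hφ, hsupp⟩).symm
    _ = inner ℝ Λ (testFunctionsToL2 μ ⟨φ, hφ, hsupp⟩) :=
        InnerProductSpace.toDual_symm_apply.symm
    _ = ∫ y, Λ y * φ y ∂μ := by
        rw [L2.inner_def]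
        refine integral_congr_ae ?_
        filter_upwards [coeFn_testFunctionsToL2 μ ⟨φ, hφ, hsupp⟩] with y hy
        rw [hy, RCLike.inner_apply, conj_trivial, mul_comm]

end WeakScore

theorem exists_contDiff_hasCompactSupport_deriv_eq {χ : ℝ → ℝ} (hχ : Continuous χ)
    (hsupp : HasCompactSupport χ) (hzero : ∫ x, χ x = 0) :
    ∃ φ : ℝ → ℝ, ContDiff ℝ 1 φ ∧ HasCompactSupport φ ∧ deriv φ = χ := by
  obtain ⟨R, hR⟩ := hsupp.isCompact.isBounded.subset_ball 0
  have hsub : Function.support χ ⊆ Set.Ioc (-R) R := fun x hx => by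
    have hx' := hR (subset_tsupport χ hx)
    rw [Real.ball_eq_Ioo, zero_sub, zero_add] at hx'
    exact Set.Ioo_subset_Ioc_self hx'
  have hderiv : deriv (fun y => ∫ x in (-R)..y, χ x) = χ :=
    funext fun y => hχ.deriv_integral _ _ _
  refine ⟨fun y => ∫ x in (-R)..y, χ x, ?_, ?_, hderiv⟩
  · rw [contDiff_one_iff_deriv, hderiv]
    exact ⟨fun y => (hχ.integral_hasStrictDerivAt _ y).hasDerivAt.differentiableAt, hχ⟩
  · refine .intro (isCompact_Icc (a := -R) (b := R)) fun y hy => ?_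
    rw [Set.mem_Icc, not_and_or, not_le, not_le] at hy
    rcases hy with hleft | hright
    · refine (intervalIntegral.integral_congr fun x hx => ?_).trans
        intervalIntegral.integral_zero
      rw [Set.uIcc_of_ge hleft.le] at hx
      exact Function.notMem_support.1 fun h => (hsub h).1.not_ge hx.2
    · rw [← hzero]
      exact intervalIntegral.integral_eq_integral_of_support_subset
        (hsub.trans (Set.Ioc_subset_Ioc_right hright.le))

/-- The du Bois-Reymond lemma: `χ = ψ - (∫ ψ) η`, with `∫ η = 1`, has a compactly supported
primitive. -/
theorem exists_forall_integral_eq_integral_mul_add_const {μ : Measure ℝ}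
    [IsFiniteMeasureOnCompacts μ] {G : ℝ → ℝ} (hG : LocallyIntegrable G)
    (h : ∀ φ : ℝ → ℝ, ContDiff ℝ 1 φ → HasCompactSupport φ →
      ∫ y, deriv φ y ∂μ = ∫ y, deriv φ y * G y) :
    ∃ c : ℝ, ∀ ψ : ℝ → ℝ, Continuous ψ → HasCompactSupport ψ →
      ∫ y, ψ y ∂μ = ∫ y, ψ y * (G y + c) := by
  let bump : ContDiffBump (0 : ℝ) := ⟨1, 2, one_pos, one_lt_two⟩
  let η := bump.normed volume
  have hη : Continuous η := bump.continuous_normed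
  have hηs : HasCompactSupport η := bump.hasCompactSupport_normed
  have hηG : Integrable fun y => η y * G y :=
    hG.integrable_smul_left_of_hasCompactSupport hη hηs
  refine ⟨∫ y, η y ∂μ - ∫ y, η y * G y, fun ψ hψ hψs => ?_⟩
  have hψG : Integrable fun y => ψ y * G y :=
    hG.integrable_smul_left_of_hasCompactSupport hψ hψs
  have hψi : Integrable ψ := hψ.integrable_of_hasCompactSupport hψs
  have hηi : Integrable η := hη.integrable_of_hasCompactSupport hηs
  set m := ∫ y, ψ y with hm
  obtain ⟨φ, hφ, hφs, hφ'⟩ := exists_contDiff_hasCompactSupport_deriv_eq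
    (χ := fun y => ψ y - m * η y) (by fun_prop) (hψs.sub (hηs.mul_left (f := fun _ => m))) (by
      rw [integral_sub hψi (hηi.const_mul m), integral_const_mul, bump.integral_normed, mul_one,
        hm, sub_self])
  have hleft : ∫ y, deriv φ y ∂μ = ∫ y, ψ y ∂μ - m * ∫ y, η y ∂μ := by
    rw [hφ', integral_sub (hψ.integrable_of_hasCompactSupport hψs)
      ((hη.integrable_of_hasCompactSupport hηs).const_mul m), integral_const_mul]
  have hright : ∫ y, deriv φ y * G y = (∫ y, ψ y * G y) - m * ∫ y, η y * G y := by
    simp only [hφ', sub_mul, mul_assoc]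
    rw [integral_sub hψG (hηG.const_mul m), integral_const_mul]
  simp only [mul_add]
  rw [integral_add hψG (hψi.mul_const _), integral_mul_const, ← hm]
  linear_combination h φ hφ hφs - hleft + hright

section WithDensity

theorem isLocallyFiniteMeasure_add {X : Type*} [TopologicalSpace X] [MeasurableSpace X]
    (μ ν : Measure X) [IsLocallyFiniteMeasure μ]
    [IsLocallyFiniteMeasure ν] : IsLocallyFiniteMeasure (μ + ν) := by
  refine ⟨fun x => ?_⟩
  obtain ⟨s, hs, hμs⟩ := μ.finiteAt_nhds x
  obtain ⟨t, ht, hνt⟩ := ν.finiteAt_nhds x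
  refine ⟨s ∩ t, inter_mem hs ht, ?_⟩
  rw [Measure.add_apply]
  exact ENNReal.add_lt_top.2 ⟨(measure_mono Set.inter_subset_left).trans_lt hμs,
    (measure_mono Set.inter_subset_right).trans_lt hνt⟩

variable {X : Type*} [TopologicalSpace X] [MeasurableSpace X] [BorelSpace X]
  {μ ν : Measure X} {q : X → ℝ}

theorem isLocallyFiniteMeasure_withDensity_ofReal (hq : LocallyIntegrable q ν) :
    IsLocallyFiniteMeasure (ν.withDensity fun x => ENNReal.ofReal (q x)) := by
  refine ⟨fun x => ?_⟩
  obtain ⟨s, hs, hqs⟩ := hq x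
  obtain ⟨t, hts, ht, hxt⟩ := mem_nhds_iff.1 hs
  refine ⟨t, ht.mem_nhds hxt, ?_⟩
  rw [withDensity_apply _ ht.measurableSet]
  exact (hqs.mono_set hts).lintegral_lt_top

variable [T2Space X] [LocallyCompactSpace X] [SigmaCompactSpace X]
  [TopologicalSpace.PseudoMetrizableSpace X]

theorem add_withDensity_ofReal_neg_eq_of_forall_integral_eq [IsLocallyFiniteMeasure μ]
    (hqm : Measurable q) (hq : LocallyIntegrable q ν)
    (h : ∀ ψ : X → ℝ, Continuous ψ → HasCompactSupport ψ → ∫ x, ψ x ∂μ = ∫ x, ψ x * q x ∂ν) :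
    μ + ν.withDensity (fun x => ENNReal.ofReal (-q x)) =
      ν.withDensity fun x => ENNReal.ofReal (q x) := by
  have := isLocallyFiniteMeasure_withDensity_ofReal hq
  have := isLocallyFiniteMeasure_withDensity_ofReal hq.neg
  have := isLocallyFiniteMeasure_add μ (ν.withDensity fun x => ENNReal.ofReal (-q x))
  refine Measure.ext_of_integral_eq_on_compactlySupported fun ψ => ?_
  have hψ (ρ : Measure X) [IsLocallyFiniteMeasure ρ] : Integrable ψ ρ :=
    ψ.continuous.integrable_of_hasCompactSupport ψ.hasCompactSupport
  have hψq : Integrable (fun x => ψ x * q x) ν :=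
    hq.integrable_smul_left_of_hasCompactSupport ψ.continuous ψ.hasCompactSupport
  rw [integral_add_measure (hψ _) (hψ _), h ψ ψ.continuous ψ.hasCompactSupport,
    integral_withDensity_eq_integral_toReal_smul (by fun_prop) (by simp),
    integral_withDensity_eq_integral_toReal_smul (by fun_prop) (by simp)]
  simp only [ENNReal.toReal_ofReal', smul_eq_mul]
  have hψneg : Integrable (fun x => max (-q x) 0 * ψ x) ν := by
    simpa only [ENNReal.toReal_ofReal', smul_eq_mul] using
      (integrable_withDensity_iff_integrable_smul' (by fun_prop) (by simp)).1
        (hψ (ν.withDensity fun x => ENNReal.ofReal (-q x)))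
  rw [← integral_add hψq hψneg]
  congr with x
  linear_combination -ψ x * max_zero_sub_max_neg_zero_eq_self (q x)

theorem ae_nonneg_and_eq_withDensity_ofReal_of_forall_integral_eq [IsLocallyFiniteMeasure μ]
    (hqm : Measurable q) (hq : LocallyIntegrable q ν)
    (h : ∀ ψ : X → ℝ, Continuous ψ → HasCompactSupport ψ → ∫ x, ψ x ∂μ = ∫ x, ψ x * q x ∂ν) :
    0 ≤ᵐ[ν] q ∧ μ = ν.withDensity fun x => ENNReal.ofReal (q x) := by
  have hadd := add_withDensity_ofReal_neg_eq_of_forall_integral_eq hqm hq h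
  have hnonneg : 0 ≤ᵐ[ν] q := by
    have hpos : ν.withDensity (fun x => ENNReal.ofReal (q x)) {x | q x < 0} = 0 := by
      rw [withDensity_apply_eq_zero (by fun_prop)]
      refine measure_mono_null (fun x hx => ?_) (measure_empty (μ := ν))
      exact hx.1 (ENNReal.ofReal_of_nonpos hx.2.le)
    rw [← hadd, Measure.add_apply, add_eq_zero, withDensity_apply_eq_zero (by fun_prop)] at hpos
    refine measure_mono_null (fun x hx => ?_) hpos.2
    have hqx : q x < 0 := not_le.1 hx
    exact ⟨by simpa using hqx, hqx⟩
  have hneg : ν.withDensity (fun x => ENNReal.ofReal (-q x)) = 0 := by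
    rw [withDensity_eq_zero_iff (by fun_prop)]
    filter_upwards [hnonneg] with x hx
    exact ENNReal.ofReal_of_nonpos (neg_nonpos.2 hx)
  exact ⟨hnonneg, by rwa [hneg, add_zero] at hadd⟩

end WithDensity

section TailIntegral

/-- `y ↦ ∫_{(y, ∞)} Λ dμ`, the function whose distributional derivative is `-Λ μ`. -/
def tailIntegral (μ : Measure ℝ) (Λ : ℝ → ℝ) (y : ℝ) : ℝ := ∫ x in Set.Ioi y, Λ x ∂μ

variable {μ : Measure ℝ} {Λ : ℝ → ℝ}

theorem abs_tailIntegral_le (hΛ : Integrable Λ μ) (y : ℝ) :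
    |tailIntegral μ Λ y| ≤ ∫ x, |Λ x| ∂μ :=
  (abs_integral_le_integral_abs).trans
    (setIntegral_le_integral hΛ.abs (Eventually.of_forall fun _ => abs_nonneg _))

variable [SFinite μ]

theorem measurable_tailIntegral (hΛ : Measurable Λ) : Measurable (tailIntegral μ Λ) := by
  have hind : Measurable fun z : ℝ × ℝ => (Set.Ioi z.1).indicator Λ z.2 :=
    (hΛ.comp measurable_snd).indicator (measurableSet_lt measurable_fst measurable_snd)
  have heq : tailIntegral μ Λ = fun y => ∫ x, (Set.Ioi y).indicator Λ x ∂μ :=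
    funext fun y => (integral_indicator measurableSet_Ioi).symm
  rw [heq]
  exact hind.stronglyMeasurable.integral_prod_right.measurable

theorem locallyIntegrable_tailIntegral (hm : Measurable Λ) (hΛ : Integrable Λ μ) :
    LocallyIntegrable (tailIntegral μ Λ) :=
  (locallyIntegrable_const (∫ x, |Λ x| ∂μ)).mono
    (measurable_tailIntegral hm).aestronglyMeasurable
    (Eventually.of_forall fun y => (abs_tailIntegral_le hΛ y).trans (le_abs_self _))

theorem integral_mul_eq_integral_deriv_mul_tailIntegral (hΛ : Integrable Λ μ) {φ : ℝ → ℝ}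
    (hφ : ContDiff ℝ 1 φ) (hsupp : HasCompactSupport φ) :
    ∫ x, Λ x * φ x ∂μ = ∫ y, deriv φ y * tailIntegral μ Λ y := by
  have hφ' : Integrable (deriv φ) :=
    (hφ.continuous_deriv le_rfl).integrable_of_hasCompactSupport hsupp.deriv
  have hsection (x : ℝ) : Λ x * φ x = ∫ y, (Set.Ioi y).indicator Λ x * deriv φ y := by
    rw [← hsupp.integral_Iic_deriv_eq hφ x, integral_Iic_eq_integral_Iio,
      ← integral_indicator measurableSet_Iio, ← integral_const_mul]
    congr with y
    by_cases hyx : y < x <;> simp [hyx]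
  have hprod : Integrable (Function.uncurry fun x y => (Set.Ioi y).indicator Λ x * deriv φ y)
      (μ.prod volume) := by
    have hlt : MeasurableSet {z : ℝ × ℝ | z.2 < z.1} :=
      measurableSet_lt measurable_snd measurable_fst
    refine ((hΛ.mul_prod hφ').indicator hlt).congr (Eventually.of_forall fun z => ?_)
    by_cases hz : z.2 < z.1 <;> simp [hz, Function.uncurry]
  simp only [hsection]
  rw [integral_integral_swap hprod]
  congr with y
  rw [integral_mul_const, integral_indicator measurableSet_Ioi, mul_comm, tailIntegral]

end TailIntegral

/-- `s` is an indefinite Lebesgue integral of `r`, that is, `s` is locally absolutely continuous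
with almost everywhere derivative `r`. -/
structure IsLebesguePrimitive (s r : ℝ → ℝ) : Prop where
  locallyIntegrable : LocallyIntegrable r
  sub_eq_integral : ∀ a b, s b - s a = ∫ y in a..b, r y

namespace IsLebesguePrimitive

variable {s r : ℝ → ℝ}

theorem intervalIntegrable (h : IsLebesguePrimitive s r) (a b : ℝ) :
    IntervalIntegrable r volume a b :=
  (h.locallyIntegrable.integrableOn_isCompact isCompact_uIcc).intervalIntegrable

theorem eq_add_integral (h : IsLebesguePrimitive s r) (a : ℝ) :
    s = fun b => s a + ∫ y in a..b, r y :=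
  funext fun b => by rw [← h.sub_eq_integral a b, add_sub_cancel]

theorem continuous (h : IsLebesguePrimitive s r) : Continuous s := by
  rw [h.eq_add_integral 0]
  exact continuous_const.add (intervalIntegral.continuous_primitive h.intervalIntegrable 0)

theorem ae_hasDerivAt (h : IsLebesguePrimitive s r) : ∀ᵐ y, HasDerivAt s (r y) y := by
  filter_upwards [LocallyIntegrable.ae_hasDerivAt_integral h.locallyIntegrable] with y hy
  rw [h.eq_add_integral 0]
  exact (hy 0).const_add (s 0)

theorem absolutelyContinuousOnInterval (h : IsLebesguePrimitive s r) (a b : ℝ) :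
    AbsolutelyContinuousOnInterval s a b := by
  rw [h.eq_add_integral a]
  exact (LipschitzWith.const (s a)).lipschitzOnWith.absolutelyContinuousOnInterval.add
    ((h.intervalIntegrable a b).absolutelyContinuousOnInterval_intervalIntegral Set.left_mem_uIcc)

end IsLebesguePrimitive

theorem isLebesguePrimitive_tailIntegral_add_const {Λ f : ℝ → ℝ}
    (hΛ : Integrable Λ (volume.withDensity fun y => ENNReal.ofReal (f y)))
    (hf : Measurable f) (hf0 : 0 ≤ᵐ[volume] f) (c : ℝ) :
    IsLebesguePrimitive
      (fun y => tailIntegral (volume.withDensity fun y => ENNReal.ofReal (f y)) Λ y + c)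
      (fun y => -(Λ y * f y)) := by
  have htoReal : (fun y => (ENNReal.ofReal (f y)).toReal • Λ y) =ᵐ[volume] fun y => Λ y * f y := by
    filter_upwards [hf0] with y hy
    rw [ENNReal.toReal_ofReal hy, smul_eq_mul, mul_comm]
  have hint : Integrable fun y => Λ y * f y :=
    ((integrable_withDensity_iff_integrable_smul' (by fun_prop) (by simp)).1 hΛ).congr htoReal
  refine ⟨hint.neg.locallyIntegrable, fun a b => ?_⟩
  have htail (y : ℝ) : tailIntegral (volume.withDensity fun y => ENNReal.ofReal (f y)) Λ y =
      ∫ x in Set.Ioi y, Λ x * f x := by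
    rw [tailIntegral, setIntegral_withDensity_eq_setIntegral_toReal_smul (by fun_prop)
      (by simp) _ measurableSet_Ioi]
    exact integral_congr_ae (ae_restrict_of_ae htoReal)
  rw [htail, htail, intervalIntegral.integral_neg,
    ← intervalIntegral.integral_Ioi_sub_Ioi' hint.integrableOn hint.integrableOn]
  ring

theorem nonneg_of_ae_nonneg {X : Type*} [TopologicalSpace X] [MeasurableSpace X]
    {ν : Measure X} [ν.IsOpenPosMeasure] {f : X → ℝ} (hf : Continuous f) (h : 0 ≤ᵐ[ν] f) (x : X) :
    0 ≤ f x := by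
  have hneg : {x | f x < 0} = ∅ :=
    ((isOpen_lt hf continuous_const).measure_eq_zero_iff ν).1
      (by simpa only [Pi.zero_apply, not_le] using ae_iff.1 h)
  exact not_lt.1 (Set.eq_empty_iff_forall_notMem.1 hneg x)

theorem IsWeakScore.exists_density {F : Measure ℝ} [IsFiniteMeasure F]
    {Λ : ℝ → ℝ} (hm : Measurable Λ) (hΛ : Integrable Λ F) (hscore : IsWeakScore F Λ) :
    ∃ f : ℝ → ℝ, (∀ y, 0 ≤ f y) ∧ F = volume.withDensity (fun y => ENNReal.ofReal (f y)) ∧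
      IsLebesguePrimitive f (fun y => -(Λ y * f y)) := by
  have hG : LocallyIntegrable (tailIntegral F Λ) := locallyIntegrable_tailIntegral hm hΛ
  obtain ⟨c, hc⟩ := exists_forall_integral_eq_integral_mul_add_const (μ := F) hG
    fun φ hφ hsupp => (hscore φ hφ hsupp).trans
      (integral_mul_eq_integral_deriv_mul_tailIntegral hΛ hφ hsupp)
  let f : ℝ → ℝ := fun y => tailIntegral F Λ y + c
  have hfm : Measurable f := (measurable_tailIntegral hm).add_const c
  obtain ⟨hf0, hF⟩ := ae_nonneg_and_eq_withDensity_ofReal_of_forall_integral_eq hfm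
    (hG.add (locallyIntegrable_const c)) hc
  have hf : IsLebesguePrimitive f (fun y => -(Λ y * f y)) := by
    have hprim := isLebesguePrimitive_tailIntegral_add_const (hF ▸ hΛ) hfm hf0 c
    rwa [← hF] at hprim
  exact ⟨f, nonneg_of_ae_nonneg hf.continuous hf0, hF, hf⟩

theorem absolutelyContinuousOnInterval_comp_of_lipschitzOnWith {X Y : Type*}
    [PseudoMetricSpace X] [PseudoMetricSpace Y] {K : NNReal} {g : X → Y} {f : ℝ → X} {t : Set X}
    {a b : ℝ} (hg : LipschitzOnWith K g t) (hf : AbsolutelyContinuousOnInterval f a b)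
    (hft : ∀ y, f y ∈ t) : AbsolutelyContinuousOnInterval (fun y => g (f y)) a b := by
  have hK : Tendsto (fun E : ℕ × (ℕ → ℝ × ℝ) =>
      K * ∑ i ∈ Finset.range E.1, dist (f (E.2 i).1) (f (E.2 i).2))
      (AbsolutelyContinuousOnInterval.totalLengthFilter ⊓
        𝓟 (AbsolutelyContinuousOnInterval.disjWithin a b)) (𝓝 0) := by
    simpa only [mul_zero] using Filter.Tendsto.const_mul (K : ℝ) hf
  refine squeeze_zero (fun _ => Finset.sum_nonneg fun _ _ => dist_nonneg) (fun E => ?_) hK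
  rw [Finset.mul_sum]
  exact Finset.sum_le_sum fun i _ => hg.dist_le_mul _ (hft _) _ (hft _)

theorem lipschitzOnWith_sqrt_add {ε : ℝ} (hε : 0 < ε) :
    LipschitzOnWith (√ε)⁻¹.toNNReal (fun x => √(x + ε)) (Set.Ici 0) := by
  refine .of_dist_le_mul fun x hx y hy => ?_
  have hsum : √ε ≤ √(x + ε) + √(y + ε) :=
    le_add_of_le_of_nonneg (Real.sqrt_le_sqrt (le_add_of_nonneg_left hx)) (Real.sqrt_nonneg _)
  have hfactor : x - y = (√(x + ε) - √(y + ε)) * (√(x + ε) + √(y + ε)) := by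
    rw [mul_comm, ← sq_sub_sq, Real.sq_sqrt (add_nonneg hx hε.le),
      Real.sq_sqrt (add_nonneg hy hε.le), add_sub_add_right_eq_sub]
  rw [Real.coe_toNNReal _ (by positivity), inv_mul_eq_div, le_div_iff₀ (Real.sqrt_pos.2 hε),
    Real.dist_eq, Real.dist_eq]
  calc |√(x + ε) - √(y + ε)| * √ε ≤ |√(x + ε) - √(y + ε)| * (√(x + ε) + √(y + ε)) := by gcongr
    _ = |x - y| := by rw [hfactor, abs_mul, abs_of_nonneg (a := √(x + ε) + _) (by positivity)]

namespace IsLebesguePrimitive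

variable {f d : ℝ → ℝ}

theorem ae_eq_zero_of_eq_zero (h : IsLebesguePrimitive f d) (hf0 : ∀ y, 0 ≤ f y) :
    ∀ᵐ y, f y = 0 → d y = 0 := by
  filter_upwards [h.ae_hasDerivAt] with y hy hfy
  have hmin : IsLocalMin f y := Eventually.of_forall fun x => hfy.trans_le (hf0 x)
  exact hmin.hasDerivAt_eq_zero hy

theorem sqrt_add_sub_eq_integral (h : IsLebesguePrimitive f d) (hf0 : ∀ y, 0 ≤ f y)
    {ε : ℝ} (hε : 0 < ε) (a b : ℝ) :
    √(f b + ε) - √(f a + ε) = ∫ y in a..b, d y / (2 * √(f y + ε)) := by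
  rw [← (absolutelyContinuousOnInterval_comp_of_lipschitzOnWith (lipschitzOnWith_sqrt_add hε)
    (h.absolutelyContinuousOnInterval a b) hf0).integral_deriv_eq_sub]
  refine intervalIntegral.integral_congr_ae ?_
  filter_upwards [h.ae_hasDerivAt] with y hy _
  exact ((hy.add_const ε).sqrt (add_pos_of_nonneg_of_pos (hf0 y) hε).ne').deriv

theorem tendsto_integral_div_sqrt_add (h : IsLebesguePrimitive f d) (hf0 : ∀ y, 0 ≤ f y)
    (hd : LocallyIntegrable fun y => d y / (2 * √(f y))) (a b : ℝ) :
    Tendsto (fun ε => ∫ y in a..b, d y / (2 * √(f y + ε))) (𝓝[>] 0)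
      (𝓝 (∫ y in a..b, d y / (2 * √(f y)))) := by
  refine intervalIntegral.tendsto_integral_filter_of_dominated_convergence
    (fun y => ‖d y / (2 * √(f y))‖) ?_ ?_ ?_ ?_
  · refine Eventually.of_forall fun ε => ?_
    have hfm : Measurable f := h.continuous.measurable
    exact (h.locallyIntegrable.aestronglyMeasurable.restrict.aemeasurable.div
      (by fun_prop)).aestronglyMeasurable
  · filter_upwards [self_mem_nhdsWithin] with ε hε
    filter_upwards [h.ae_eq_zero_of_eq_zero hf0] with y hzero _
    rcases (hf0 y).eq_or_lt with hfy | hfy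
    · simp [hzero hfy.symm]
    · have hsqrt : √(f y) ≤ √(f y + ε) := Real.sqrt_le_sqrt (le_add_of_nonneg_right (le_of_lt hε))
      have hpos : 0 < √(f y) := Real.sqrt_pos.2 hfy
      rw [norm_div, norm_div, Real.norm_of_nonneg (by positivity : 0 ≤ 2 * √(f y)),
        Real.norm_of_nonneg (by positivity : 0 ≤ 2 * √(f y + ε))]
      exact div_le_div_of_nonneg_left (norm_nonneg _) (mul_pos two_pos hpos)
        (mul_le_mul_of_nonneg_left hsqrt zero_le_two)
  · exact (hd.integrableOn_isCompact isCompact_uIcc).intervalIntegrable.norm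
  · filter_upwards [h.ae_eq_zero_of_eq_zero hf0] with y hzero _
    rcases (hf0 y).eq_or_lt with hfy | hfy
    · simp [hzero hfy.symm]
    · have hcont : ContinuousAt (fun ε => d y / (2 * √(f y + ε))) 0 := by
        refine ContinuousAt.div (by fun_prop) (by fun_prop) ?_
        rw [add_zero]
        positivity
      simpa using hcont.tendsto.mono_left nhdsWithin_le_nhds

/-- At a zero of `f` the division by zero gives the right value `0`, since `f ≥ 0` is minimal
there. -/
theorem sqrt (h : IsLebesguePrimitive f d) (hf0 : ∀ y, 0 ≤ f y)
    (hd : LocallyIntegrable fun y => d y / (2 * √(f y))) :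
    IsLebesguePrimitive (fun y => √(f y)) (fun y => d y / (2 * √(f y))) := by
  refine ⟨hd, fun a b => tendsto_nhds_unique_of_eventuallyEq ?_
    (h.tendsto_integral_div_sqrt_add hf0 hd a b) ?_ (f := fun ε => √(f b + ε) - √(f a + ε))⟩
  · have hcont : Continuous fun ε => √(f b + ε) - √(f a + ε) := by fun_prop
    simpa using (hcont.tendsto 0).mono_left nhdsWithin_le_nhds
  · filter_upwards [self_mem_nhdsWithin] with ε hε
    exact h.sqrt_add_sub_eq_integral hf0 hε a b

end IsLebesguePrimitive

section Translation

section AddCommGroup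

variable {G : Type*} [AddCommGroup G] [MeasurableSpace G]

/-- The squared `L²(μ)` distance between `r` and its translate by `τ`. -/
def translationSqDist (μ : Measure G) (r : G → ℝ) (τ : G) : ℝ :=
  ∫ y, (r (y - τ) - r y) ^ 2 ∂μ

variable {μ : Measure G} {r : G → ℝ}

theorem translationSqDist_nonneg (τ : G) : 0 ≤ translationSqDist μ r τ :=
  integral_nonneg fun _ => sq_nonneg _

theorem translationSqDist_zero : translationSqDist μ r 0 = 0 := by
  simp [translationSqDist]

variable [TopologicalSpace G] [IsTopologicalAddGroup G] [BorelSpace G] [μ.IsAddLeftInvariant]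

theorem translationSqDist_eq_norm_sq (hr : MemLp r 2 μ) (τ : G) :
    translationSqDist μ r τ =
      ‖(DomAddAct.mk (-τ) +ᵥ hr.toLp r) - hr.toLp r‖ ^ 2 := by
  rw [DomAddAct.mk_vadd_toLp, ← MemLp.toLp_sub, norm_toLp_two_sq]
  simp only [translationSqDist, Pi.sub_apply, vadd_eq_add, sub_eq_neg_add]

theorem abs_translationSqDist_le (hr : MemLp r 2 μ) (τ : G) :
    |translationSqDist μ r τ| ≤ (2 * ‖hr.toLp r‖) ^ 2 := by
  rw [translationSqDist_eq_norm_sq hr, abs_of_nonneg (sq_nonneg _)]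
  gcongr
  refine (norm_sub_le _ _).trans_eq ?_
  rw [DomAddAct.norm_vadd_Lp, two_mul]

theorem continuous_translationSqDist [IsLocallyFiniteMeasure μ] [μ.InnerRegularCompactLTTop]
    (hr : MemLp r 2 μ) : Continuous (translationSqDist μ r) := by
  have : Fact ((2 : ENNReal) ≠ ⊤) := ⟨ENNReal.ofNat_ne_top⟩
  have hact : Continuous fun τ : G => DomAddAct.mk (-τ) +ᵥ hr.toLp r :=
    (DomAddAct.continuous_mk.comp continuous_neg).vadd continuous_const
  rw [funext (translationSqDist_eq_norm_sq hr)]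
  exact (hact.sub continuous_const).norm.pow 2

end AddCommGroup

/-- The average of `translationSqDist` over the translations `t u` with `u ∈ [0, 1]`. -/
def meanTranslationSqDist (r : ℝ → ℝ) (t : ℝ) : ℝ :=
  ∫ u in (0 : ℝ)..1, translationSqDist volume r (t * u)

variable {r s : ℝ → ℝ}

theorem meanTranslationSqDist_nonneg (t : ℝ) : 0 ≤ meanTranslationSqDist r t :=
  intervalIntegral.integral_nonneg zero_le_one fun _ _ => translationSqDist_nonneg _

theorem meanTranslationSqDist_zero : meanTranslationSqDist r 0 = 0 := by
  simp [meanTranslationSqDist, translationSqDist_zero]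

theorem continuous_meanTranslationSqDist (hr : MemLp r 2) :
    Continuous (meanTranslationSqDist r) := by
  have hcont := continuous_translationSqDist hr
  exact intervalIntegral.continuous_parametric_intervalIntegral_of_continuous' (by fun_prop) 0 1

theorem abs_meanTranslationSqDist_le (hr : MemLp r 2) (t : ℝ) :
    |meanTranslationSqDist r t| ≤ (2 * ‖hr.toLp r‖) ^ 2 := by
  have hle := intervalIntegral.norm_integral_le_of_norm_le_const (a := 0) (b := 1)
    (f := fun u => translationSqDist volume r (t * u))
    fun u _ => abs_translationSqDist_le hr (t * u)
  rwa [sub_zero, abs_one, mul_one] at hle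

theorem integrable_prod_sq_sub_translate (hrm : Measurable r) (hr : MemLp r 2) (t : ℝ) :
    Integrable (fun z : ℝ × ℝ => (r (z.1 - t * z.2) - r z.1) ^ 2)
      (volume.prod (volume.restrict (Set.Ioc 0 1))) := by
  rw [integrable_prod_iff' (Measurable.aestronglyMeasurable (by fun_prop))]
  refine ⟨Eventually.of_forall fun u => ?_, ?_⟩
  · have htranslate : MemLp (fun y => r (y - t * u)) 2 :=
      hr.comp_measurePreserving (measurePreserving_sub_right volume (t * u))
    exact (htranslate.sub hr).integrable_sq
  · have hcont : Continuous fun u => translationSqDist volume r (t * u) :=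
      (continuous_translationSqDist hr).comp (by fun_prop)
    simp only [norm_pow, Real.norm_eq_abs, sq_abs]
    exact (hcont.intervalIntegrable 0 1).1

/-- Jensen's inequality applied to `s (y - t) - s y + t r y = -t ∫₀¹ (r (y - t u) - r y) du`. -/
theorem IsLebesguePrimitive.sq_taylor_le (h : IsLebesguePrimitive s r) (hrm : Measurable r)
    {t y : ℝ}
    (hint : IntegrableOn (fun u => (r (y - t * u) - r y) ^ 2) (Set.Ioc 0 1)) :
    (s (y - t) - s y + t * r y) ^ 2 ≤ t ^ 2 * ∫ u in Set.Ioc 0 1, (r (y - t * u) - r y) ^ 2 := by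
  have : IsProbabilityMeasure (volume.restrict (Set.Ioc (0 : ℝ) 1)) := ⟨by simp⟩
  have hdiff : IntegrableOn (fun u => r (y - t * u) - r y) (Set.Ioc 0 1) :=
    ((memLp_two_iff_integrable_sq (Measurable.aestronglyMeasurable (by fun_prop))).2
      hint).integrable one_le_two
  have htranslate : IntegrableOn (fun u => r (y - t * u)) (Set.Ioc 0 1) := by
    simpa only [IntegrableOn, Pi.add_def, sub_add_cancel] using
      Integrable.add hdiff (integrable_const (r y))
  have hincrement : s y - s (y - t) = t * ∫ u in Set.Ioc 0 1, r (y - t * u) := by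
    rw [h.sub_eq_integral, ← intervalIntegral.integral_of_le zero_le_one]
    simp
  have hremainder : s (y - t) - s y + t * r y =
      -(t * ∫ u in Set.Ioc 0 1, (r (y - t * u) - r y)) := by
    rw [integral_sub htranslate (integrable_const _), integral_const, probReal_univ, one_smul]
    linear_combination -hincrement
  rw [hremainder, neg_sq, mul_pow]
  gcongr
  exact ConvexOn.map_integral_le (even_two.convexOn_pow (𝕜 := ℝ)) (by fun_prop) isClosed_univ
    (Eventually.of_forall fun _ => Set.mem_univ _) hdiff hint

theorem IsLebesguePrimitive.integral_sq_taylor_le (h : IsLebesguePrimitive s r)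
    (hrm : Measurable r) (hr : MemLp r 2) (t : ℝ) :
    ∫ y, (s (y - t) - s y + t * r y) ^ 2 ≤ t ^ 2 * meanTranslationSqDist r t := by
  have hprod := integrable_prod_sq_sub_translate hrm hr t
  calc ∫ y, (s (y - t) - s y + t * r y) ^ 2
      ≤ ∫ y, t ^ 2 * ∫ u in Set.Ioc 0 1, (r (y - t * u) - r y) ^ 2 := by
        refine integral_mono_of_nonneg (Eventually.of_forall fun _ => sq_nonneg _)
          (hprod.integral_prod_left.const_mul _) ?_
        filter_upwards [hprod.prod_right_ae] with y hy
        exact h.sq_taylor_le hrm hy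
    _ = t ^ 2 * meanTranslationSqDist r t := by
        rw [integral_const_mul, integral_integral_swap hprod, meanTranslationSqDist,
          intervalIntegral.integral_of_le zero_le_one]
        simp only [translationSqDist]

end Translation

section LocationScore

/-- `Λ` is a score of the location family with Lebesgue density `f ≥ 0`, in the form needed for
`L²` differentiability: `√f` is locally absolutely continuous with `(√f)' = -½ Λ √f ∈ L²`. -/
structure IsLocationScore (f Λ : ℝ → ℝ) : Prop where
  measurable : Measurable Λ
  nonneg : ∀ y, 0 ≤ f y
  memLp_mul_sqrt : MemLp (fun y => Λ y * √(f y)) 2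
  isLebesguePrimitive_sqrt :
    IsLebesguePrimitive (fun y => √(f y)) (fun y => -(1 / 2) * (Λ y * √(f y)))

theorem IsLocationScore.continuous_density {f Λ : ℝ → ℝ} (h : IsLocationScore f Λ) :
    Continuous f := by
  simpa only [Pi.pow_def, Real.sq_sqrt (h.nonneg _)] using
    h.isLebesguePrimitive_sqrt.continuous.pow 2

theorem memLp_two_mul_sqrt_of_withDensity {α : Type*} [MeasurableSpace α] {ν : Measure α}
    {f Λ : α → ℝ} (hf : Measurable f) (hf0 : ∀ x, 0 ≤ f x) (hΛm : Measurable Λ)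
    (hΛ : MemLp Λ 2 (ν.withDensity fun x => ENNReal.ofReal (f x))) :
    MemLp (fun x => Λ x * √(f x)) 2 ν := by
  rw [memLp_two_iff_integrable_sq (Measurable.aestronglyMeasurable (by fun_prop))]
  have hsq := (integrable_withDensity_iff_integrable_smul' (by fun_prop) (by simp)).1
    hΛ.integrable_sq
  simpa only [ENNReal.toReal_ofReal (hf0 _), smul_eq_mul, mul_pow, Real.sq_sqrt (hf0 _),
    mul_comm] using hsq

theorem IsWeakScore.exists_isLocationScore {F : Measure ℝ} [IsFiniteMeasure F] {Λ : ℝ → ℝ}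
    (h : IsWeakScore F Λ) (hm : Measurable Λ) (hΛ : MemLp Λ 2 F) :
    ∃ f : ℝ → ℝ, F = volume.withDensity (fun y => ENNReal.ofReal (f y)) ∧
      IsLocationScore f Λ := by
  obtain ⟨f, hf0, hF, hf⟩ := h.exists_density hm (hΛ.integrable one_le_two)
  have hL2 : MemLp (fun y => Λ y * √(f y)) 2 :=
    memLp_two_mul_sqrt_of_withDensity hf.continuous.measurable hf0 hm (hF ▸ hΛ)
  have hhalf : (fun y => -(Λ y * f y) / (2 * √(f y))) =
      fun y => -(1 / 2) * (Λ y * √(f y)) := by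
    funext y
    calc -(Λ y * f y) / (2 * √(f y)) = -(1 / 2) * (Λ y * (f y / √(f y))) := by ring
      _ = -(1 / 2) * (Λ y * √(f y)) := by rw [Real.div_sqrt]
  refine ⟨f, hF, hm, hf0, hL2, hhalf ▸ hf.sqrt hf0 ?_⟩
  rw [hhalf]
  exact (hL2.const_mul _).locallyIntegrable one_le_two

end LocationScore

section DotProduct

variable {ι : Type*} [Fintype ι]

theorem dotProduct_sq_le (x h : ι → ℝ) :
    (x ⬝ᵥ h) ^ 2 ≤ ‖h‖ ^ 2 * (Fintype.card ι * ∑ i, x i ^ 2) := by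
  have hsup : ∑ i, h i ^ 2 ≤ Fintype.card ι * ‖h‖ ^ 2 := by
    rw [← nsmul_eq_mul]
    refine Finset.sum_le_card_nsmul _ _ _ fun i _ => ?_
    rw [← sq_abs]
    gcongr
    exact norm_le_pi_norm h i
  calc (x ⬝ᵥ h) ^ 2 ≤ (∑ i, x i ^ 2) * ∑ i, h i ^ 2 := Finset.sum_mul_sq_le_sq_mul_sq _ _ _
    _ ≤ (∑ i, x i ^ 2) * (Fintype.card ι * ‖h‖ ^ 2) := by gcongr
    _ = ‖h‖ ^ 2 * (Fintype.card ι * ∑ i, x i ^ 2) := by ring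

variable {K : Measure (ι → ℝ)} {N : (ι → ℝ) → ℝ} {W : ℝ → ℝ} {M : ℝ}

theorem integrable_mul_comp_dotProduct (hN : Integrable N K) (hW : Continuous W)
    (hM : ∀ t, |W t| ≤ M) (h : ι → ℝ) : Integrable (fun x => N x * W (x ⬝ᵥ h)) K :=
  hN.mul_bdd (c := M) (by fun_prop) (Eventually.of_forall fun x => hM (x ⬝ᵥ h))

theorem tendsto_integral_mul_comp_dotProduct (hN : Integrable N K) (hW : Continuous W)
    (hM : ∀ t, |W t| ≤ M) :
    Tendsto (fun h => ∫ x, N x * W (x ⬝ᵥ h) ∂K) (𝓝 0) (𝓝 (∫ x, N x * W 0 ∂K)) := by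
  refine tendsto_integral_filter_of_dominated_convergence (fun x => |N x| * M)
    (Eventually.of_forall fun h => (integrable_mul_comp_dotProduct hN hW hM h).1)
    (Eventually.of_forall fun h => Eventually.of_forall fun x => ?_) (hN.abs.mul_const M)
    (Eventually.of_forall fun x => ?_)
  · rw [norm_mul, Real.norm_eq_abs, Real.norm_eq_abs]
    gcongr
    exact hM _
  · have hcont : Continuous fun h : ι → ℝ => N x * W (x ⬝ᵥ h) := by fun_prop
    simpa only [dotProduct_zero] using hcont.tendsto 0

end DotProduct

section Shear

variable {X : Type*} [MeasurableSpace X] {K : Measure X} [SFinite K] {c : X → ℝ}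

theorem integral_prod_comp_sub_le {H : X → ℝ → ℝ} {N : X → ℝ} (hH : ∀ x y, 0 ≤ H x y)
    (hN : Integrable N K) (hHN : ∀ x, ∫ y, H x y ≤ N x) :
    ∫ z, H z.1 (z.2 - c z.1) ∂(K.prod volume) ≤ ∫ x, N x ∂K := by
  by_cases hint : Integrable (fun z => H z.1 (z.2 - c z.1)) (K.prod volume)
  · rw [integral_prod _ hint]
    refine integral_mono_of_nonneg
      (Eventually.of_forall fun x => integral_nonneg fun y => hH x _) hN
      (Eventually.of_forall fun x => ?_)
    exact (integral_sub_right_eq_self (H x) (c x)).trans_le (hHN x)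
  · rw [integral_undef hint]
    exact integral_nonneg fun x => (integral_nonneg (hH x)).trans (hHN x)

theorem integrable_prod_mul_comp_sub {N : X → ℝ} {g : ℝ → ℝ} (hc : Measurable c)
    (hN : Integrable N K) (hg : Integrable g) :
    Integrable (fun z => N z.1 * g (z.2 - c z.1)) (K.prod volume) := by
  have hshear : MeasurePreserving (fun z : X × ℝ => (z.1, z.2 - c z.1)) (K.prod volume)
      (K.prod volume) :=
    (MeasurePreserving.id K).skew_product (by fun_prop)
      (Eventually.of_forall fun x => (measurePreserving_sub_right volume (c x)).map_eq)
  exact hshear.integrable_comp_of_integrable (hN.mul_prod hg)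

end Shear

section Regression

variable {ι : Type*} [Fintype ι]

/-- The density at `z = (x, y)` of the regression model with error density `f`, with respect to
the product of the regressor distribution and Lebesgue measure. -/
def regressionDensity (f : ℝ → ℝ) (β : ι → ℝ) (z : (ι → ℝ) × ℝ) : ℝ :=
  f (z.2 - z.1 ⬝ᵥ β)

/-- The score vector of the regression model at `z = (x, y)`, for the error score `Λ`. -/
def regressionScore (Λ : ℝ → ℝ) (β : ι → ℝ) (z : (ι → ℝ) × ℝ) (i : ι) : ℝ :=
  Λ (z.2 - z.1 ⬝ᵥ β) * z.1 i

variable {f Λ : ℝ → ℝ}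

theorem regressionDensity_add (β h : ι → ℝ) (z : (ι → ℝ) × ℝ) :
    regressionDensity f (β + h) z = f (z.2 - z.1 ⬝ᵥ β - z.1 ⬝ᵥ h) := by
  rw [regressionDensity, dotProduct_add, sub_add_eq_sub_sub]

theorem sum_regressionScore_mul (β t : ι → ℝ) (z : (ι → ℝ) × ℝ) :
    ∑ i, regressionScore Λ β z i * t i = Λ (z.2 - z.1 ⬝ᵥ β) * (z.1 ⬝ᵥ t) := by
  simp only [regressionScore, dotProduct, Finset.mul_sum, mul_assoc]

variable {K : Measure (ι → ℝ)} [SFinite K]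

namespace IsLocationScore

theorem integrable_sum_regressionScore_sq_mul (h : IsLocationScore f Λ)
    (hK : Integrable (fun x : ι → ℝ => ∑ i, x i ^ 2) K) (β : ι → ℝ) :
    Integrable (fun z => (∑ i, regressionScore Λ β z i ^ 2) * regressionDensity f β z)
      (K.prod volume) := by
  refine (integrable_prod_mul_comp_sub (c := fun x => x ⬝ᵥ β) (by fun_prop) hK
    h.memLp_mul_sqrt.integrable_sq).congr (Eventually.of_forall fun z => ?_)
  simp only [regressionScore, regressionDensity, mul_pow, Real.sq_sqrt (h.nonneg _),
    ← Finset.mul_sum]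
  ring

theorem sqErr_regression_le (hΛ : IsLocationScore f Λ)
    (hK : Integrable (fun x : ι → ℝ => ∑ i, x i ^ 2) K) (β h : ι → ℝ) :
    sqErr (K.prod volume) (regressionDensity f) β (regressionScore Λ β) h ≤
      ‖h‖ ^ 2 * ∫ x, (Fintype.card ι * ∑ i, x i ^ 2) *
        meanTranslationSqDist (fun y => -(1 / 2) * (Λ y * √(f y))) (x ⬝ᵥ h) ∂K := by
  set s : ℝ → ℝ := fun y => √(f y)
  set r : ℝ → ℝ := fun y => -(1 / 2) * (Λ y * √(f y))
  have hr : MemLp r 2 := hΛ.memLp_mul_sqrt.const_mul _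
  have hrm : Measurable r :=
    ((hΛ.measurable.mul hΛ.continuous_density.measurable.sqrt).const_mul _)
  have hintegrand (z : (ι → ℝ) × ℝ) :
      (√(regressionDensity f (β + h) z) - √(regressionDensity f β z) *
        (1 + 1 / 2 * ∑ i, regressionScore Λ β z i * h i)) ^ 2 =
      (s (z.2 - z.1 ⬝ᵥ β - z.1 ⬝ᵥ h) - s (z.2 - z.1 ⬝ᵥ β) +
        z.1 ⬝ᵥ h * r (z.2 - z.1 ⬝ᵥ β)) ^ 2 := by
    rw [regressionDensity_add, sum_regressionScore_mul, regressionDensity]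
    ring
  rw [sqErr, integral_congr_ae (Eventually.of_forall hintegrand), ← integral_const_mul]
  refine integral_prod_comp_sub_le (c := fun x => x ⬝ᵥ β)
    (H := fun x y => (s (y - x ⬝ᵥ h) - s y + x ⬝ᵥ h * r y) ^ 2) (fun _ _ => sq_nonneg _)
    ((integrable_mul_comp_dotProduct (hK.const_mul _) (continuous_meanTranslationSqDist hr)
      (abs_meanTranslationSqDist_le hr) h).const_mul _) fun x => ?_
  calc ∫ y, (s (y - x ⬝ᵥ h) - s y + x ⬝ᵥ h * r y) ^ 2
      ≤ (x ⬝ᵥ h) ^ 2 * meanTranslationSqDist r (x ⬝ᵥ h) :=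
        hΛ.isLebesguePrimitive_sqrt.integral_sq_taylor_le hrm hr _
    _ ≤ ‖h‖ ^ 2 * (Fintype.card ι * ∑ i, x i ^ 2) * meanTranslationSqDist r (x ⬝ᵥ h) := by
        gcongr
        · exact meanTranslationSqDist_nonneg _
        · exact dotProduct_sq_le x h
    _ = ‖h‖ ^ 2 * ((Fintype.card ι * ∑ i, x i ^ 2) * meanTranslationSqDist r (x ⬝ᵥ h)) :=
        mul_assoc _ _ _

theorem integral_sq_sub_regressionScore_le (hΛ : IsLocationScore f Λ)
    (hK : Integrable (fun x : ι → ℝ => ∑ i, x i ^ 2) K) (β h : ι → ℝ) {t : ι → ℝ}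
    (ht : ‖t‖ ≤ 1) :
    ∫ z, (√(regressionDensity f (β + h) z) * (∑ i, regressionScore Λ (β + h) z i * t i) -
        √(regressionDensity f β z) * ∑ i, regressionScore Λ β z i * t i) ^ 2 ∂(K.prod volume) ≤
      ∫ x, (Fintype.card ι * ∑ i, x i ^ 2) *
        translationSqDist volume (fun y => Λ y * √(f y)) (x ⬝ᵥ h) ∂K := by
  set r : ℝ → ℝ := fun y => Λ y * √(f y)
  have hr : MemLp r 2 := hΛ.memLp_mul_sqrt
  have hintegrand (z : (ι → ℝ) × ℝ) :
      (√(regressionDensity f (β + h) z) * (∑ i, regressionScore Λ (β + h) z i * t i) -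
        √(regressionDensity f β z) * ∑ i, regressionScore Λ β z i * t i) ^ 2 =
      (z.1 ⬝ᵥ t) ^ 2 * (r (z.2 - z.1 ⬝ᵥ β - z.1 ⬝ᵥ h) - r (z.2 - z.1 ⬝ᵥ β)) ^ 2 := by
    rw [regressionDensity_add, sum_regressionScore_mul, sum_regressionScore_mul, dotProduct_add,
      sub_add_eq_sub_sub, regressionDensity]
    ring
  rw [integral_congr_ae (Eventually.of_forall hintegrand)]
  refine integral_prod_comp_sub_le (c := fun x => x ⬝ᵥ β)
    (H := fun x y => (x ⬝ᵥ t) ^ 2 * (r (y - x ⬝ᵥ h) - r y) ^ 2) (fun _ _ => by positivity)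
    (integrable_mul_comp_dotProduct (hK.const_mul _) (continuous_translationSqDist hr)
      (abs_translationSqDist_le hr) h) fun x => ?_
  rw [integral_const_mul]
  refine mul_le_mul_of_nonneg_right ?_ (translationSqDist_nonneg _)
  refine (dotProduct_sq_le x t).trans (mul_le_of_le_one_left (by positivity) ?_)
  exact pow_le_one₀ (norm_nonneg _) ht

theorem isL2Diff_regression (hΛ : IsLocationScore f Λ)
    (hK : Integrable (fun x : ι → ℝ => ∑ i, x i ^ 2) K) (β : ι → ℝ) :
    IsL2Diff (K.prod volume) (regressionDensity f) β (regressionScore Λ β) := by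
  refine ⟨hΛ.integrable_sum_regressionScore_sq_mul hK β, ?_⟩
  have hr : MemLp (fun y => -(1 / 2) * (Λ y * √(f y))) 2 := hΛ.memLp_mul_sqrt.const_mul _
  have hlim := tendsto_integral_mul_comp_dotProduct (hK.const_mul (Fintype.card ι : ℝ))
    (continuous_meanTranslationSqDist hr) (abs_meanTranslationSqDist_le hr)
  simp only [meanTranslationSqDist_zero, mul_zero, integral_zero] at hlim
  refine Asymptotics.isLittleO_iff.2 fun ε hε => ?_
  filter_upwards [hlim.eventually (gt_mem_nhds hε)] with h hh
  have hnonneg : 0 ≤ sqErr (K.prod volume) (regressionDensity f) β (regressionScore Λ β) h :=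
    integral_nonneg fun _ => sq_nonneg _
  rw [Real.norm_of_nonneg hnonneg, Real.norm_of_nonneg (sq_nonneg _), mul_comm]
  exact (hΛ.sqErr_regression_le hK β h).trans (by gcongr)

theorem isContL2Diff_regression (hΛ : IsLocationScore f Λ)
    (hK : Integrable (fun x : ι → ℝ => ∑ i, x i ^ 2) K) (β : ι → ℝ) :
    IsContL2Diff (K.prod volume) (regressionDensity f) (regressionScore Λ) β := by
  refine ⟨hΛ.isL2Diff_regression hK β, ?_⟩
  have hr : MemLp (fun y => Λ y * √(f y)) 2 := hΛ.memLp_mul_sqrt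
  have hlim := tendsto_integral_mul_comp_dotProduct (hK.const_mul (Fintype.card ι : ℝ))
    (continuous_translationSqDist hr) (abs_translationSqDist_le hr)
  simp only [translationSqDist_zero, mul_zero, integral_zero] at hlim
  refine squeeze_zero
    (fun h => Real.iSup_nonneg fun t => integral_nonneg fun _ => sq_nonneg _)
    (fun h => Real.iSup_le
      (fun t => hΛ.integral_sq_sub_regressionScore_le hK β h t.2) (integral_nonneg fun x => ?_))
    hlim
  exact mul_nonneg (by positivity) (translationSqDist_nonneg _)

end IsLocationScore

theorem linear_regression_continuously_L2_differentiable_general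
    (F : Measure ℝ) [IsFiniteMeasure F]
    (hFisher : ∃ C : ℝ, ∀ φ : ℝ → ℝ, ContDiff ℝ 1 φ → HasCompactSupport φ →
      (∫ y, deriv φ y ∂F) ^ 2 ≤ C * ∫ y, φ y ^ 2 ∂F)
    (K : Measure (ι → ℝ)) [SFinite K]
    (hK : Integrable (fun x : ι → ℝ => ∑ i, x i ^ 2) K) :
    ∃ f : ℝ → ℝ, Measurable f ∧ (∀ y, 0 ≤ f y) ∧
      F = volume.withDensity (fun y => ENNReal.ofReal (f y)) ∧
      ∃ Λ : ℝ → ℝ, ∀ β : ι → ℝ,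
        IsContL2Diff (K.prod volume) (regressionDensity f) (regressionScore Λ) β := by
  obtain ⟨Λ, hΛm, hΛ, hscore⟩ := exists_isWeakScore hFisher
  obtain ⟨f, hF, hf⟩ := hscore.exists_isLocationScore hΛm hΛ
  exact ⟨f, hf.continuous_density.measurable, hf.nonneg, hF, Λ,
    fun β => hf.isContL2Diff_regression hK β⟩

end Regression

/-- **`L₂` differentiability of linear regression with stochastic regressors.**
If the error distribution `F` on `ℝ` has finite Fisher information of location
(in the sense of Huber's variational characterization over compactly supported
`C¹` functions), and the regressor distribution `K` on `ℝ^p` has a finite second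
moment `∫ |x|² K(dx) < ∞`, then `F` possesses a Lebesgue density `f`, and the
linear regression model `P_β(dx,dy) = F(dy - xᵀβ) K(dx)`, with densities
`(x,y) ↦ f(y - xᵀβ)` w.r.t. `K ⊗ λ` and scores `(x,y) ↦ Λ_f(y - xᵀβ) x`, is
continuously `L₂` differentiable at every `β ∈ ℝ^p`. -/
theorem linear_regression_continuously_L2_differentiable
    {p : ℕ}
    (F : Measure ℝ) [IsProbabilityMeasure F]
    -- finite Fisher information of location
    (hFisher : ∃ C : ℝ, ∀ φ : ℝ → ℝ, ContDiff ℝ 1 φ → HasCompactSupport φ →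
        (∫ y, deriv φ y ∂F) ^ 2 ≤ C * ∫ y, φ y ^ 2 ∂F)
    (K : Measure (Fin p → ℝ)) [IsProbabilityMeasure K]
    -- finite second moment of the regressors
    (hK : Integrable (fun x : Fin p → ℝ => ∑ i, x i ^ 2) K) :
    ∃ f : ℝ → ℝ, Measurable f ∧ (∀ y, 0 ≤ f y) ∧
      F = MeasureTheory.volume.withDensity (fun y => ENNReal.ofReal (f y)) ∧
      ∃ Λf : ℝ → ℝ, ∀ β : Fin p → ℝ,
        IsContL2Diff (K.prod MeasureTheory.volume)
          (fun β' (z : (Fin p → ℝ) × ℝ) => f (z.2 - ∑ i, z.1 i * β' i))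
          (fun β' (z : (Fin p → ℝ) × ℝ) i => Λf (z.2 - ∑ j, z.1 j * β' j) * z.1 i)
          β :=
  linear_regression_continuously_L2_differentiable_general F hFisher K hK
end
end

section
/- Binomial GLM with logit link: Fix m ∈ ℕ and let Q = {Binom(m, p) : p ∈ (0,1)} with counting densities q_p(y) = C(m, y) p^y (1 − p)^{m−y} on y ∈ {0, …, m}, which has Fisher information I^Q_p = m/(p(1 − p)), and let ℓ(θ) = e^θ/(1 + e^θ) be the logit link. Let K be a probability measure on ℝ^p with ∫ |x|² K(dx) < ∞. Then the Binomial GLM P = {P_β(dx, dy) = Binom(m, ℓ(xᵀβ))(dy) K(dx) : β ∈ ℝ^p} is continuously L₂ differentiable at every β ∈ ℝ^p. -/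
open MeasureTheory Filter Topology

noncomputable section

/-- Counting density of the binomial distribution `Binom(m, p)`. -/
def binomPdf (m : ℕ) (p : ℝ) (y : ℕ) : ℝ :=
  if y ≤ m then (m.choose y : ℝ) * p ^ y * (1 - p) ^ (m - y) else 0

/-- The logit link `θ ↦ e^θ / (1 + e^θ)`. -/
def logitLink (θ : ℝ) : ℝ := Real.exp θ / (1 + Real.exp θ)

/-!
Write `r ϑ = √(dQ_ϑ)`. If `ϑ ↦ r ϑ ω` is differentiable with derivative `½ √(dQ_ϑ) Λ_ϑᵀ`, and the
linear form `√(dQ_ϑ) Λ_ϑᵀ` is continuous at the parameter and dominated near it by a square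
integrable function, then both requirements of continuous `L₂` differentiability follow from
dominated convergence, the difference quotients of `r` being dominated by the mean value inequality.

In a generalized linear model this linear form is `√(f θ y) u(θ, y) xᵀ` with `θ = xᵀβ`, so if the
one-dimensional root score `√f u` is bounded by `c y` with `c ∈ L₂`, then `‖xᵀ‖ c y` is an
admissible dominating function as soon as `∫ |x|² dK < ∞`. In the logit parametrization the binomial
density is the exponential family `C(m, y) exp (y θ - m log (1 + e^θ))`, whose score `y - m ℓ(θ)` is
bounded by `m` on the support `{0, …, m}`.
-/

section DominatedConvergence

variable {Ω X E F : Type*} [MeasurableSpace Ω] {ν : Measure Ω} {bound : Ω → ℝ} {n : ℕ}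
  [TopologicalSpace X] {x₀ : X} [NormedAddCommGroup E] [NormedAddCommGroup F]

theorem norm_norm_sub_pow_le_two_mul_pow {a b : F} {C : ℝ} (ha : ‖a‖ ≤ C) (hb : ‖b‖ ≤ C) :
    ‖‖a - b‖ ^ n‖ ≤ (2 * C) ^ n := by
  rw [norm_pow, norm_norm]
  exact pow_le_pow_left₀ (norm_nonneg _) ((norm_sub_le a b).trans (by linarith)) n

theorem eventually_integrable_norm_sub_pow {f : X → Ω → F}
    (hf_meas : ∀ᶠ x in 𝓝 x₀, AEStronglyMeasurable (f x) ν)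
    (h_bound : ∀ᶠ x in 𝓝 x₀, ∀ᵐ ω ∂ν, ‖f x ω‖ ≤ bound ω)
    (bound_integrable : Integrable (fun ω => bound ω ^ n) ν) :
    ∀ᶠ x in 𝓝 x₀, Integrable (fun ω => ‖f x ω - f x₀ ω‖ ^ n) ν := by
  have h_int : Integrable (fun ω => (2 * bound ω) ^ n) ν := by
    simpa only [mul_pow] using bound_integrable.const_mul (2 ^ n)
  filter_upwards [hf_meas, h_bound] with x hx_meas hx_bound
  refine h_int.mono' ((hx_meas.sub hf_meas.self_of_nhds).norm.pow n) ?_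
  filter_upwards [hx_bound, h_bound.self_of_nhds] with ω hx hx₀
  exact norm_norm_sub_pow_le_two_mul_pow hx hx₀

theorem tendsto_integral_norm_sub_pow [FirstCountableTopology X] {f : X → Ω → F} (hn : 0 < n)
    (hf_meas : ∀ᶠ x in 𝓝 x₀, AEStronglyMeasurable (f x) ν)
    (h_bound : ∀ᶠ x in 𝓝 x₀, ∀ᵐ ω ∂ν, ‖f x ω‖ ≤ bound ω)
    (bound_integrable : Integrable (fun ω => bound ω ^ n) ν)
    (h_cont : ∀ᵐ ω ∂ν, ContinuousAt (f · ω) x₀) :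
    Tendsto (fun x => ∫ ω, ‖f x ω - f x₀ ω‖ ^ n ∂ν) (𝓝 x₀) (𝓝 0) := by
  rw [← integral_zero Ω ℝ (μ := ν)]
  refine tendsto_integral_filter_of_dominated_convergence (fun ω => (2 * bound ω) ^ n) ?_ ?_ ?_ ?_
  · filter_upwards [hf_meas] with x hx
    exact (hx.sub hf_meas.self_of_nhds).norm.pow n
  · filter_upwards [h_bound] with x hx_bound
    filter_upwards [hx_bound, h_bound.self_of_nhds] with ω hx hx₀
    exact norm_norm_sub_pow_le_two_mul_pow hx hx₀
  · simpa only [mul_pow] using bound_integrable.const_mul (2 ^ n)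
  · filter_upwards [h_cont] with ω hω
    simpa [hn.ne'] using (tendsto_iff_norm_sub_tendsto_zero.1 hω).pow n

theorem integrable_count_of_finite_support [MeasurableSingletonClass Ω] {g : Ω → F}
    (hg : g.support.Finite) :
    Integrable g Measure.count :=
  integrable_count_iff.2 (summable_of_hasFiniteSupport (hg.subset (by simp)))

variable [NormedSpace ℝ E] [NormedSpace ℝ F]

theorem iSup_integral_norm_apply_pow_le {A : Ω → E →L[ℝ] F}
    (hA : Integrable (fun ω => ‖A ω‖ ^ n) ν) :
    ⨆ t : {t : E // ‖t‖ ≤ 1}, ∫ ω, ‖A ω t‖ ^ n ∂ν ≤ ∫ ω, ‖A ω‖ ^ n ∂ν := by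
  have : Nonempty {t : E // ‖t‖ ≤ 1} := ⟨0, by simp⟩
  refine ciSup_le fun t => integral_mono_of_nonneg (.of_forall fun ω => by positivity) hA
    (.of_forall fun ω => ?_)
  exact pow_le_pow_left₀ (norm_nonneg _) ((A ω).unit_le_opNorm t t.2) n

theorem tendsto_iSup_integral_norm_apply_sub_pow [FirstCountableTopology X]
    {A : X → Ω → E →L[ℝ] F} (hn : 0 < n)
    (hA_meas : ∀ᶠ x in 𝓝 x₀, AEStronglyMeasurable (A x) ν)
    (h_bound : ∀ᶠ x in 𝓝 x₀, ∀ᵐ ω ∂ν, ‖A x ω‖ ≤ bound ω)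
    (bound_integrable : Integrable (fun ω => bound ω ^ n) ν)
    (h_cont : ∀ᵐ ω ∂ν, ContinuousAt (A · ω) x₀) :
    Tendsto (fun x => ⨆ t : {t : E // ‖t‖ ≤ 1}, ∫ ω, ‖(A x ω - A x₀ ω) t‖ ^ n ∂ν)
      (𝓝 x₀) (𝓝 0) := by
  refine squeeze_zero' (.of_forall fun x => Real.iSup_nonneg fun t => by positivity) ?_
    (tendsto_integral_norm_sub_pow hn hA_meas h_bound bound_integrable h_cont)
  filter_upwards [eventually_integrable_norm_sub_pow hA_meas h_bound bound_integrable] with x hx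
  exact iSup_integral_norm_apply_pow_le hx

theorem norm_remainder_le_of_norm_hasFDerivAt_le {f : E → F} {f' : E → E →L[ℝ] F} {s : Set E}
    {x h : E} {C : ℝ} (hs : Convex ℝ s) (hx : x ∈ s) (hxh : x + h ∈ s)
    (h_diff : ∀ z ∈ s, HasFDerivAt f (f' z) z) (h_bound : ∀ z ∈ s, ‖f' z‖ ≤ C) :
    ‖f (x + h) - f x - f' x h‖ ≤ 2 * C * ‖h‖ := by
  have h_bound_sub : ∀ z ∈ s, ‖f' z - f' x‖ ≤ 2 * C := fun z hz =>
    (norm_sub_le _ _).trans (by linarith [h_bound z hz, h_bound x hx])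
  simpa only [add_sub_cancel_left] using hs.norm_image_sub_le_of_norm_hasFDerivWithin_le'
    (fun z hz => (h_diff z hz).hasFDerivWithinAt) h_bound_sub hx hxh

theorem isLittleO_integral_norm_remainder_pow {f : E → Ω → F} {f' : E → Ω → E →L[ℝ] F}
    {s : Set E} {x₀ : E} (hn : 0 < n) (hs : s ∈ 𝓝 x₀)
    (hf_meas : ∀ᶠ x in 𝓝 x₀, AEStronglyMeasurable (f x) ν)
    (hf'_meas : AEStronglyMeasurable (f' x₀) ν)
    (h_bound : ∀ᵐ ω ∂ν, ∀ x ∈ s, ‖f' x ω‖ ≤ bound ω)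
    (bound_integrable : Integrable (fun ω => bound ω ^ n) ν)
    (h_diff : ∀ᵐ ω ∂ν, ∀ x ∈ s, HasFDerivAt (f · ω) (f' x ω) x) :
    (fun h => ∫ ω, ‖f (x₀ + h) ω - f x₀ ω - f' x₀ ω h‖ ^ n ∂ν) =o[𝓝 0] fun h => ‖h‖ ^ n := by
  obtain ⟨ε, hε, hball⟩ := Metric.mem_nhds_iff.1 hs
  have h_add : Tendsto (x₀ + ·) (𝓝 0) (𝓝 x₀) :=
    (continuous_const_add x₀).tendsto' 0 x₀ (add_zero x₀)
  have h_mem : ∀ᶠ h in 𝓝 (0 : E), x₀ + h ∈ Metric.ball x₀ ε :=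
    h_add.eventually (Metric.ball_mem_nhds x₀ hε)
  refine (Asymptotics.isLittleO_iff_tendsto fun h hh => ?_).2 ?_
  · simp [(norm_eq_zero.1 (eq_zero_of_pow_eq_zero hh)), hn.ne']
  simp only [← integral_div]
  rw [← integral_zero Ω ℝ (μ := ν)]
  refine tendsto_integral_filter_of_dominated_convergence (fun ω => (2 * bound ω) ^ n) ?_ ?_ ?_ ?_
  · filter_upwards [h_add.eventually hf_meas] with h hh
    have h_rem_meas := (hh.sub hf_meas.self_of_nhds).sub (hf'_meas.apply_continuousLinearMap h)
    simp only [div_eq_mul_inv]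
    exact (h_rem_meas.norm.pow n).mul_const _
  · filter_upwards [h_mem] with h hh
    filter_upwards [h_bound, h_diff] with ω hω_bound hω_diff
    have h_rem := norm_remainder_le_of_norm_hasFDerivAt_le (convex_ball x₀ ε)
      (Metric.mem_ball_self hε) hh (fun z hz => hω_diff z (hball hz))
      (fun z hz => hω_bound z (hball hz))
    have hω_nonneg : 0 ≤ bound ω := (norm_nonneg _).trans (hω_bound x₀ (mem_of_mem_nhds hs))
    rw [Real.norm_of_nonneg (by positivity)]
    refine div_le_of_le_mul₀ (by positivity) (by positivity) ?_
    rw [← mul_pow]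
    gcongr
  · simpa only [mul_pow] using bound_integrable.const_mul (2 ^ n)
  · filter_upwards [h_diff] with ω hω
    have h_rem := hasFDerivAt_iff_isLittleO_nhds_zero.1 (hω x₀ (mem_of_mem_nhds hs))
    exact (h_rem.norm_norm.pow hn).tendsto_div_nhds_zero

end DominatedConvergence

section DotCLM

variable {ι : Type*} [Fintype ι]

/-- The linear form `t ↦ xᵀt` on `ℝ^ι`. Its operator norm is taken with respect to the sup norm of
`ι → ℝ`, the norm used by `IsL2Diff` and `IsContL2Diff`. -/
def dotCLM (x : ι → ℝ) : (ι → ℝ) →L[ℝ] ℝ := ∑ i, x i • ContinuousLinearMap.proj i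

theorem dotCLM_apply (x t : ι → ℝ) : dotCLM x t = ∑ i, x i * t i := by
  simp [dotCLM]

theorem dotCLM_const_mul (c : ℝ) (x : ι → ℝ) : dotCLM (fun i => c * x i) = c • dotCLM x := by
  simp [dotCLM, Finset.smul_sum, mul_smul]

theorem continuous_dotCLM : Continuous (dotCLM (ι := ι)) := by
  unfold dotCLM
  fun_prop

theorem norm_dotCLM_le (x : ι → ℝ) : ‖dotCLM x‖ ≤ ∑ i, |x i| := by
  refine ContinuousLinearMap.opNorm_le_bound _ (by positivity) fun t => ?_
  rw [dotCLM_apply, Finset.sum_mul]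
  refine norm_sum_le_of_le _ fun i _ => ?_
  rw [norm_mul]
  exact mul_le_mul_of_nonneg_left (norm_le_pi_norm t i) (norm_nonneg _)

theorem sq_norm_dotCLM_le (x : ι → ℝ) : ‖dotCLM x‖ ^ 2 ≤ Fintype.card ι * ∑ i, x i ^ 2 :=
  calc ‖dotCLM x‖ ^ 2 ≤ (∑ i, |x i|) ^ 2 := by gcongr; exact norm_dotCLM_le x
    _ ≤ Fintype.card ι * ∑ i, |x i| ^ 2 := sq_sum_le_card_mul_sum_sq
    _ = Fintype.card ι * ∑ i, x i ^ 2 := by simp only [sq_abs]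

end DotCLM

section RootScore

variable {Ω ι : Type*} [Fintype ι]

/-- The root score `√(dQ_ϑ) Λ_ϑᵀ` of a family with densities `q` and scores `Λ`, as a linear form on
the parameter space. Half of it is the derivative of `ϑ ↦ √(q ϑ ω)`, and continuous `L₂`
differentiability asks for its continuity in `L₂`. -/
def rootScore (q : (ι → ℝ) → Ω → ℝ) (Λ : (ι → ℝ) → Ω → ι → ℝ) (ϑ : ι → ℝ) (ω : Ω) :
    (ι → ℝ) →L[ℝ] ℝ :=
  √(q ϑ ω) • dotCLM (Λ ϑ ω)

variable {q : (ι → ℝ) → Ω → ℝ} {Λ : (ι → ℝ) → Ω → ι → ℝ} {ϑ : ι → ℝ}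

theorem rootScore_apply (ω : Ω) (t : ι → ℝ) :
    rootScore q Λ ϑ ω t = √(q ϑ ω) * ∑ i, Λ ϑ ω i * t i := by
  simp [rootScore, dotCLM_apply]

theorem sum_sq_score_mul_density [DecidableEq ι] {ω : Ω} (hq : 0 ≤ q ϑ ω) :
    (∑ i, Λ ϑ ω i ^ 2) * q ϑ ω = ∑ i, rootScore q Λ ϑ ω (Pi.single i 1) ^ 2 := by
  simp [rootScore_apply, Pi.single_apply, mul_pow, Real.sq_sqrt hq, ← Finset.mul_sum, mul_comm]

variable [MeasurableSpace Ω] {ν : Measure Ω} {s : Set (ι → ℝ)} {G : Ω → ℝ}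

theorem integrable_sum_sq_score_mul_density (hq_nonneg : ∀ᵐ ω ∂ν, 0 ≤ q ϑ ω)
    (h_meas : AEStronglyMeasurable (rootScore q Λ ϑ) ν)
    (h_bound : ∀ᵐ ω ∂ν, ‖rootScore q Λ ϑ ω‖ ≤ G ω) (hG : Integrable (fun ω => G ω ^ 2) ν) :
    Integrable (fun ω => (∑ i, Λ ϑ ω i ^ 2) * q ϑ ω) ν := by
  classical
  have h_coord (i : ι) : Integrable (fun ω => rootScore q Λ ϑ ω (Pi.single i 1) ^ 2) ν := by
    refine hG.mono' ((h_meas.apply_continuousLinearMap _).pow 2) ?_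
    filter_upwards [h_bound] with ω hω
    have h_unit : ‖(Pi.single i 1 : ι → ℝ)‖ ≤ 1 := by
      rw [Pi.norm_single (G := fun _ => ℝ), norm_one]
    rw [norm_pow]
    exact pow_le_pow_left₀ (norm_nonneg _)
      (((rootScore q Λ ϑ ω).unit_le_opNorm _ h_unit).trans hω) 2
  refine (integrable_finsetSum Finset.univ fun i _ => h_coord i).congr ?_
  filter_upwards [hq_nonneg] with ω hω
  exact (sum_sq_score_mul_density hω).symm

theorem isL2Diff_of_dominated_rootScore (hs : s ∈ 𝓝 ϑ) (hq_nonneg : ∀ᵐ ω ∂ν, 0 ≤ q ϑ ω)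
    (hq_meas : ∀ᶠ η in 𝓝 ϑ, AEStronglyMeasurable (q η) ν)
    (h_meas : AEStronglyMeasurable (rootScore q Λ ϑ) ν)
    (h_bound : ∀ᵐ ω ∂ν, ∀ η ∈ s, ‖rootScore q Λ η ω‖ ≤ G ω)
    (hG : Integrable (fun ω => G ω ^ 2) ν)
    (h_diff : ∀ᵐ ω ∂ν, ∀ η ∈ s,
      HasFDerivAt (fun η => √(q η ω)) ((1 / 2 : ℝ) • rootScore q Λ η ω) η) :
    IsL2Diff ν q ϑ (Λ ϑ) := by
  have h_bound_ϑ := h_bound.mono fun ω hω => hω ϑ (mem_of_mem_nhds hs)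
  refine ⟨integrable_sum_sq_score_mul_density hq_nonneg h_meas h_bound_ϑ hG, ?_⟩
  have h_half_bound : ∀ᵐ ω ∂ν, ∀ η ∈ s, ‖(1 / 2 : ℝ) • rootScore q Λ η ω‖ ≤ G ω := by
    filter_upwards [h_bound] with ω hω η hη
    rw [norm_smul, Real.norm_of_nonneg (by norm_num)]
    linarith [hω η hη, norm_nonneg (rootScore q Λ η ω)]
  have h_sqrt_meas := hq_meas.mono fun η hη => Real.continuous_sqrt.comp_aestronglyMeasurable hη
  refine (isLittleO_integral_norm_remainder_pow two_pos hs h_sqrt_meas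
    (h_meas.const_smul (1 / 2 : ℝ)) h_half_bound hG h_diff).congr_left
    fun h => integral_congr_ae (.of_forall fun ω => ?_)
  simp only [Real.norm_eq_abs, sq_abs, FunLike.coe_smul, Pi.smul_apply,
    smul_eq_mul, rootScore_apply]
  ring

theorem isContL2Diff_of_dominated_rootScore (hs : s ∈ 𝓝 ϑ) (hq_nonneg : ∀ᵐ ω ∂ν, 0 ≤ q ϑ ω)
    (hq_meas : ∀ᶠ η in 𝓝 ϑ, AEStronglyMeasurable (q η) ν)
    (h_meas : ∀ᶠ η in 𝓝 ϑ, AEStronglyMeasurable (rootScore q Λ η) ν)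
    (h_bound : ∀ᵐ ω ∂ν, ∀ η ∈ s, ‖rootScore q Λ η ω‖ ≤ G ω)
    (hG : Integrable (fun ω => G ω ^ 2) ν)
    (h_diff : ∀ᵐ ω ∂ν, ∀ η ∈ s,
      HasFDerivAt (fun η => √(q η ω)) ((1 / 2 : ℝ) • rootScore q Λ η ω) η)
    (h_cont : ∀ᵐ ω ∂ν, ContinuousAt (rootScore q Λ · ω) ϑ) :
    IsContL2Diff ν q Λ ϑ := by
  refine ⟨isL2Diff_of_dominated_rootScore hs hq_nonneg hq_meas h_meas.self_of_nhds h_bound hG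
    h_diff, ?_⟩
  have h_bound_nhds : ∀ᶠ η in 𝓝 ϑ, ∀ᵐ ω ∂ν, ‖rootScore q Λ η ω‖ ≤ G ω := by
    filter_upwards [hs] with η hη using h_bound.mono fun ω hω => hω η hη
  have h_add : Tendsto (ϑ + ·) (𝓝 0) (𝓝 ϑ) := (continuous_const_add ϑ).tendsto' 0 ϑ (add_zero ϑ)
  refine ((tendsto_iSup_integral_norm_apply_sub_pow two_pos h_meas h_bound_nhds hG h_cont).comp
    h_add).congr fun h => ?_
  simp only [Function.comp_apply, FunLike.coe_sub, Pi.sub_apply, rootScore_apply,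
    Real.norm_eq_abs, sq_abs]

end RootScore

section GeneralizedLinearModel

variable {ι Y : Type*} [Fintype ι] {f u : ℝ → Y → ℝ}

theorem rootScore_glm (β : ι → ℝ) (z : (ι → ℝ) × Y) :
    rootScore (fun β z => f (∑ i, z.1 i * β i) z.2)
        (fun β z i => u (∑ j, z.1 j * β j) z.2 * z.1 i) β z =
      (√(f (dotCLM z.1 β) z.2) * u (dotCLM z.1 β) z.2) • dotCLM z.1 := by
  simp only [rootScore, ← dotCLM_apply, dotCLM_const_mul, smul_smul]

variable [MeasurableSpace Y]

theorem measurable_comp_dotCLM {g : ℝ → Y → ℝ} (hg_cont : ∀ y, Continuous (g · y))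
    (hg_meas : ∀ θ, Measurable (g θ)) (β : ι → ℝ) :
    Measurable fun z : (ι → ℝ) × Y => g (dotCLM z.1 β) z.2 := by
  have h_dot : Measurable fun z : (ι → ℝ) × Y => dotCLM z.1 β := by
    simp only [dotCLM_apply]
    fun_prop
  exact (measurable_uncurry_of_continuous_of_measurable hg_cont hg_meas).comp
    (h_dot.prodMk measurable_snd)

theorem integrable_sq_norm_dotCLM_mul {K : Measure (ι → ℝ)} {μ : Measure Y} [SFinite μ] {c : Y → ℝ}
    (hK : Integrable (fun x : ι → ℝ => ∑ i, x i ^ 2) K) (hc : Integrable (fun y => c y ^ 2) μ) :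
    Integrable (fun z : (ι → ℝ) × Y => (‖dotCLM z.1‖ * c z.2) ^ 2) (K.prod μ) := by
  have h_dot : Integrable (fun x : ι → ℝ => ‖dotCLM x‖ ^ 2) K := by
    refine (hK.const_mul (Fintype.card ι : ℝ)).mono'
      (continuous_dotCLM.norm.pow 2).aestronglyMeasurable (.of_forall fun x => ?_)
    rw [norm_pow, norm_norm]
    exact sq_norm_dotCLM_le x
  simpa only [mul_pow] using h_dot.mul_prod hc

theorem isContL2Diff_glm_of_dominated {K : Measure (ι → ℝ)} {μ : Measure Y} [SFinite μ] {c : Y → ℝ}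
    (hK : Integrable (fun x : ι → ℝ => ∑ i, x i ^ 2) K)
    (hf_nonneg : ∀ θ y, 0 ≤ f θ y) (hf_meas : ∀ θ, Measurable (f θ))
    (hu_meas : ∀ θ, Measurable (u θ))
    (h_cont : ∀ y, Continuous fun θ => √(f θ y) * u θ y)
    (h_bound : ∀ θ y, |√(f θ y) * u θ y| ≤ c y) (hc : Integrable (fun y => c y ^ 2) μ)
    (h_diff : ∀ θ y, HasDerivAt (fun θ => √(f θ y)) (1 / 2 * (√(f θ y) * u θ y)) θ)
    (β : ι → ℝ) :
    IsContL2Diff (K.prod μ) (fun β z => f (∑ i, z.1 i * β i) z.2)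
      (fun β z i => u (∑ j, z.1 j * β j) z.2 * z.1 i) β := by
  have h_root_cont (y : Y) : Continuous fun θ => √(f θ y) :=
    continuous_iff_continuousAt.2 fun θ => (h_diff θ y).continuousAt
  have hf_cont (y : Y) : Continuous (f · y) := by
    simpa only [Real.sq_sqrt (hf_nonneg _ y)] using (h_root_cont y).fun_pow 2
  refine isContL2Diff_of_dominated_rootScore univ_mem (.of_forall fun z => hf_nonneg _ _)
    (.of_forall fun η => ?_) (.of_forall fun η => ?_) (.of_forall fun z η _ => ?_)
    (integrable_sq_norm_dotCLM_mul hK hc) (.of_forall fun z η _ => ?_) (.of_forall fun z => ?_)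
  · simpa only [dotCLM_apply] using (measurable_comp_dotCLM hf_cont hf_meas η).aestronglyMeasurable
  · have h_score_meas := measurable_comp_dotCLM h_cont
      (fun θ => (hf_meas θ).sqrt.mul (hu_meas θ)) η
    rw [funext (rootScore_glm η)]
    exact h_score_meas.aestronglyMeasurable.smul
      continuous_dotCLM.aestronglyMeasurable.comp_fst
  · rw [rootScore_glm, norm_smul, mul_comm]
    exact mul_le_mul_of_nonneg_left (h_bound _ _) (norm_nonneg _)
  · rw [rootScore_glm, smul_smul]
    simp only [← dotCLM_apply]
    exact (h_diff _ z.2).comp_hasFDerivAt η (dotCLM z.1).hasFDerivAt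
  · simp only [rootScore_glm]
    exact (((h_cont z.2).comp (dotCLM z.1).continuous).smul continuous_const).continuousAt

end GeneralizedLinearModel

section Binomial

variable {m y : ℕ} {p θ : ℝ}

theorem binomPdf_nonneg (hp₀ : 0 ≤ p) (hp₁ : p ≤ 1) : 0 ≤ binomPdf m p y := by
  have := sub_nonneg.2 hp₁
  unfold binomPdf
  split_ifs <;> positivity

theorem sum_binomPdf (m : ℕ) (p : ℝ) : ∑ y ∈ Finset.range (m + 1), binomPdf m p y = 1 := by
  have h_binom := add_pow p (1 - p) m
  rw [add_sub_cancel, one_pow] at h_binom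
  rw [h_binom]
  refine Finset.sum_congr rfl fun y hy => ?_
  rw [binomPdf, if_pos (Finset.mem_range_succ_iff.1 hy)]
  ring

theorem binomPdf_le_one (hp₀ : 0 ≤ p) (hp₁ : p ≤ 1) : binomPdf m p y ≤ 1 := by
  by_cases hy : y ≤ m
  · rw [← sum_binomPdf m p]
    exact Finset.single_le_sum (f := binomPdf m p) (fun k _ => binomPdf_nonneg hp₀ hp₁)
      (Finset.mem_range_succ_iff.2 hy)
  · simp [binomPdf, hy]

theorem logitLink_eq_sigmoid : logitLink = Real.sigmoid := by
  funext θ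
  rw [logitLink, Real.sigmoid_def, Real.exp_neg]
  field_simp
  ring

theorem logitLink_nonneg (θ : ℝ) : 0 ≤ logitLink θ :=
  logitLink_eq_sigmoid ▸ Real.sigmoid_nonneg θ

theorem logitLink_le_one (θ : ℝ) : logitLink θ ≤ 1 :=
  logitLink_eq_sigmoid ▸ Real.sigmoid_le_one θ

theorem continuous_logitLink : Continuous logitLink :=
  logitLink_eq_sigmoid ▸ continuous_sigmoid

theorem binomPdf_logitLink_eq_exp (hy : y ≤ m) (θ : ℝ) :
    binomPdf m (logitLink θ) y =
      m.choose y * Real.exp (y * θ - m * Real.log (1 + Real.exp θ)) := by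
  have h_pos : 0 < 1 + Real.exp θ := by positivity
  have h_compl : 1 - logitLink θ = 1 / (1 + Real.exp θ) := by
    rw [logitLink]
    field_simp
    ring
  rw [binomPdf, if_pos hy, h_compl, logitLink, Real.exp_sub, Real.exp_nat_mul, Real.exp_nat_mul,
    Real.exp_log h_pos, mul_assoc, div_pow, div_pow, one_pow, div_mul_div_comm, ← pow_add,
    Nat.add_sub_cancel' hy, mul_one]

theorem binomPdf_logitLink_pos (hy : y ≤ m) (θ : ℝ) : 0 < binomPdf m (logitLink θ) y := by
  rw [binomPdf_logitLink_eq_exp hy]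
  have := Nat.choose_pos hy
  positivity

theorem hasDerivAt_binomPdf_logitLink (m y : ℕ) (θ : ℝ) :
    HasDerivAt (fun θ => binomPdf m (logitLink θ) y)
      (binomPdf m (logitLink θ) y * (y - m * logitLink θ)) θ := by
  by_cases hy : y ≤ m
  · have h_logPartition : HasDerivAt (fun θ => Real.log (1 + Real.exp θ)) (logitLink θ) θ :=
      ((Real.hasDerivAt_exp θ).const_add 1).log (by positivity)
    have h_exponent : HasDerivAt (fun θ => y * θ - m * Real.log (1 + Real.exp θ))
        (y - m * logitLink θ) θ :=
      (((hasDerivAt_id' θ).const_mul (y : ℝ)).sub (h_logPartition.const_mul (m : ℝ))).congr_deriv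
        (by rw [mul_one])
    simp only [binomPdf_logitLink_eq_exp hy]
    simpa only [mul_assoc] using h_exponent.exp.const_mul (m.choose y : ℝ)
  · simpa [binomPdf, hy] using hasDerivAt_const θ (0 : ℝ)

theorem hasDerivAt_sqrt_of_hasDerivAt_mul {f : ℝ → ℝ} {u : ℝ} (hf_pos : 0 < f θ)
    (hf : HasDerivAt f (f θ * u) θ) : HasDerivAt (fun θ => √(f θ)) (1 / 2 * (√(f θ) * u)) θ := by
  refine (hf.sqrt hf_pos.ne').congr_deriv ?_
  have h_sqrt_ne : √(f θ) ≠ 0 := (Real.sqrt_pos.2 hf_pos).ne'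
  field_simp
  rw [Real.sq_sqrt hf_pos.le, mul_comm]

theorem hasDerivAt_sqrt_binomPdf_logitLink (m y : ℕ) (θ : ℝ) :
    HasDerivAt (fun θ => √(binomPdf m (logitLink θ) y))
      (1 / 2 * (√(binomPdf m (logitLink θ) y) * (y - m * logitLink θ))) θ := by
  by_cases hy : y ≤ m
  · exact hasDerivAt_sqrt_of_hasDerivAt_mul (binomPdf_logitLink_pos hy θ)
      (hasDerivAt_binomPdf_logitLink m y θ)
  · simpa [binomPdf, hy] using hasDerivAt_const θ (0 : ℝ)

theorem continuous_sqrt_binomPdf_logitLink_mul_sub (m y : ℕ) :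
    Continuous fun θ => √(binomPdf m (logitLink θ) y) * (y - m * logitLink θ) := by
  have h_root : Continuous fun θ => √(binomPdf m (logitLink θ) y) :=
    continuous_iff_continuousAt.2 fun θ => (hasDerivAt_sqrt_binomPdf_logitLink m y θ).continuousAt
  exact h_root.mul (continuous_const.sub (continuous_logitLink.const_mul _))

theorem abs_natCast_sub_natCast_mul_le (hy : y ≤ m) (hp₀ : 0 ≤ p) (hp₁ : p ≤ 1) :
    |y - m * p| ≤ m := by
  have hy' : (y : ℝ) ≤ m := mod_cast hy
  have h_mean_nonneg : 0 ≤ m * p := by positivity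
  have h_mean_le : m * p ≤ m := mul_le_of_le_one_right m.cast_nonneg hp₁
  exact abs_sub_le_of_nonneg_of_le y.cast_nonneg hy' h_mean_nonneg h_mean_le

theorem abs_sqrt_binomPdf_mul_sub_le (hp₀ : 0 ≤ p) (hp₁ : p ≤ 1) :
    |√(binomPdf m p y) * (y - m * p)| ≤ if y ≤ m then (m : ℝ) else 0 := by
  split_ifs with hy
  · rw [abs_mul, abs_of_nonneg (Real.sqrt_nonneg _)]
    have h_root_le := Real.sqrt_le_one.2 (binomPdf_le_one (m := m) (y := y) hp₀ hp₁)
    exact (mul_le_of_le_one_left (abs_nonneg _) h_root_le).trans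
      (abs_natCast_sub_natCast_mul_le hy hp₀ hp₁)
  · simp [binomPdf, hy]

end Binomial

theorem binomial_glm_logit_continuously_L2_differentiable_general
    {ι : Type*} [Fintype ι] (m : ℕ) (K : Measure (ι → ℝ))
    (hK : Integrable (fun x : ι → ℝ => ∑ i, x i ^ 2) K) (β : ι → ℝ) :
    IsContL2Diff (K.prod (Measure.count : Measure ℕ))
      (fun β' (z : (ι → ℝ) × ℕ) => binomPdf m (logitLink (∑ i, z.1 i * β' i)) z.2)
      (fun β' (z : (ι → ℝ) × ℕ) i =>
        ((z.2 : ℝ) - m * logitLink (∑ j, z.1 j * β' j)) * z.1 i)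
      β := by
  have h_bound_integrable :
      Integrable (fun y => (if y ≤ m then (m : ℝ) else 0) ^ 2) Measure.count :=
    integrable_count_of_finite_support ((Set.finite_Iic m).subset fun y hy => by
      by_contra h; simp_all)
  exact isContL2Diff_glm_of_dominated (f := fun θ y => binomPdf m (logitLink θ) y)
    (u := fun θ y => y - m * logitLink θ) hK
    (fun θ _ => binomPdf_nonneg (logitLink_nonneg θ) (logitLink_le_one θ))
    (fun _ => measurable_from_nat) (fun _ => measurable_from_nat)
    (continuous_sqrt_binomPdf_logitLink_mul_sub m)
    (fun θ _ => abs_sqrt_binomPdf_mul_sub_le (logitLink_nonneg θ) (logitLink_le_one θ))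
    h_bound_integrable (fun θ y => hasDerivAt_sqrt_binomPdf_logitLink m y θ) β

/-- **Binomial GLM with logit link.** For the binomial error model `Binom(m, p)`
(which has Fisher information `m/(p(1-p))`) with logit link `ℓ(θ) = e^θ/(1+e^θ)`,
if `∫ |x|² K(dx) < ∞`, then the binomial GLM
`P_β(dx,dy) = Binom(m, ℓ(xᵀβ))(dy) K(dx)`, with densities relative to
`K ⊗ counting` and scores `(x,y) ↦ (y - m ℓ(xᵀβ)) x`, is continuously `L₂`
differentiable at every `β ∈ ℝ^p`. -/
theorem binomial_glm_logit_continuously_L2_differentiable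
    {p : ℕ} (m : ℕ)
    (K : Measure (Fin p → ℝ)) [IsProbabilityMeasure K]
    (hK : Integrable (fun x : Fin p → ℝ => ∑ i, x i ^ 2) K)
    (β : Fin p → ℝ) :
    IsContL2Diff (K.prod (Measure.count : Measure ℕ))
      (fun β' (z : (Fin p → ℝ) × ℕ) => binomPdf m (logitLink (∑ i, z.1 i * β' i)) z.2)
      (fun β' (z : (Fin p → ℝ) × ℕ) i =>
        ((z.2 : ℝ) - m * logitLink (∑ j, z.1 j * β' j)) * z.1 i)
      β :=
  binomial_glm_logit_continuously_L2_differentiable_general m K hK β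
end
end

section
/- Shape-link construction for the GEVD: Let a₃ = e^{−1/2}, let a₂ > 1 be a solution of a₂^{a₂} = e^{2(1 − e^{−1/2})}, and let a₁ = a₂ (log a₂)³ / 2. Define f: ℝ → ℝ by f(x) = x²/2 + x + 1 for x > 0 and f(x) = a₁/(log(a₂ − x))² + a₃ for x ≤ 0. Then: (a) the constants satisfy a₁/(log a₂)² + a₃ = 1 and 2a₁/(a₂ (log a₂)³) = 1; (b) f is continuously differentiable on ℝ, with f′(x) = (x + 1) for the quadratic part's derivative x + 1 when x > 0 and f′(x) = 2a₁/((a₂ − x)(log(a₂ − x))³) when x < 0, matching at 0; (c) f is strictly increasing; and (d) f(x) > e^{−1/2} for all x ∈ ℝ. -/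
open Real

noncomputable section

/-!
With `L = log a₂`, the defining equation of `a₂` reads `a₂ L = 2 (1 - a₃)`, so the lower branch
takes the value `a₂ L / 2 + a₃ = 1` at `0`, while the choice of `a₁` makes its slope there `1`.
Value and slope agree with those of `x² / 2 + x + 1`, hence `f` is `C¹`. Both branches have positive
derivative, so `f` is strictly increasing, and the lower branch stays above its limit `a₃` at `-∞`.
-/

section Gluing

open Set

theorem hasDerivAt_ite_lt {E : Type*} [NormedAddCommGroup E] [NormedSpace ℝ E] {c : ℝ}
    {g g' h h' : ℝ → E} (hg : ∀ x ∈ Ici c, HasDerivWithinAt g (g' x) (Ici c) x)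
    (hh : ∀ x ∈ Iic c, HasDerivWithinAt h (h' x) (Iic c) x)
    (hval : g c = h c) (hslope : g' c = h' c) (x : ℝ) :
    HasDerivAt (fun y ↦ if c < y then g y else h y) (if c < x then g' x else h' x) x := by
  have eqOn_right : EqOn (fun y ↦ if c < y then g y else h y) g (Ici c) := by
    intro y hy
    rcases eq_or_lt_of_le (mem_Ici.mp hy) with rfl | hlt
    · simp [hval]
    · simp [hlt]
  have eqOn_left : EqOn (fun y ↦ if c < y then g y else h y) h (Iic c) :=
    fun y hy ↦ if_neg (not_lt.mpr hy)
  rcases lt_trichotomy x c with hlt | rfl | hgt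
  · rw [if_neg hlt.not_gt]
    exact ((hh x hlt.le).congr_of_mem eqOn_left hlt.le).hasDerivAt (Iic_mem_nhds hlt)
  · have left := (hh x self_mem_Iic).congr_of_mem eqOn_left self_mem_Iic
    have right := (hg x self_mem_Ici).congr_of_mem eqOn_right self_mem_Ici
    rw [hslope] at right
    rw [if_neg (lt_irrefl x)]
    simpa only [Iic_union_Ici, hasDerivWithinAt_univ] using left.union right
  · rw [if_pos hgt]
    exact ((hg x hgt.le).congr_of_mem eqOn_right hgt.le).hasDerivAt (Ici_mem_nhds hgt)

theorem continuous_ite_lt {α X : Type*} [TopologicalSpace α] [LinearOrder α] [OrderClosedTopology α]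
    [TopologicalSpace X] {c : α} {u v : α → X}
    (hu : ContinuousOn u (Ici c)) (hv : ContinuousOn v (Iic c)) (hval : u c = v c) :
    Continuous fun x ↦ if c < x then u x else v x := by
  have glued : Continuous fun x ↦ if x ≤ c then v x else u x :=
    continuous_if_le continuous_id continuous_const hv hu fun x hx ↦ by
      rw [show x = c from hx, hval]
  simpa only [← not_le, ite_not] using glued

theorem contDiff_one_of_hasDerivAt {𝕜 E : Type*} [NontriviallyNormedField 𝕜]
    [NormedAddCommGroup E] [NormedSpace 𝕜 E] {f f' : 𝕜 → E}
    (hf : ∀ x, HasDerivAt f (f' x) x) (hf' : Continuous f') : ContDiff 𝕜 1 f := by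
  rw [contDiff_one_iff_deriv, deriv_eq hf]
  exact ⟨fun x ↦ (hf x).differentiableAt, hf'⟩

end Gluing

theorem hasDerivAt_sq_div_two_add_add_one (x : ℝ) :
    HasDerivAt (fun y : ℝ ↦ y ^ 2 / 2 + y + 1) (x + 1) x := by
  have := ((((hasDerivAt_id x).pow 2).div_const 2).add (hasDerivAt_id x)).add_const 1
  exact this.congr_deriv (by simp)

theorem hasDerivAt_div_log_sub_pow (a b : ℝ) (n : ℕ) {x : ℝ} (hlog : log (b - x) ≠ 0) :
    HasDerivAt (fun y ↦ a / log (b - y) ^ n) (n * a / ((b - x) * log (b - x) ^ (n + 1))) x := by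
  have hsub : b - x ≠ 0 := (log_ne_zero.mp hlog).1
  have log_deriv : HasDerivAt (fun y ↦ log (b - y)) (-1 / (b - x)) x :=
    ((hasDerivAt_id x).const_sub b).log hsub
  refine ((hasDerivAt_const x a).div (log_deriv.pow n) (pow_ne_zero n hlog)).congr_deriv ?_
  rcases n with _ | n
  · simp
  · simp only [Nat.add_sub_cancel, zero_mul, zero_sub, Pi.pow_apply]
    field_simp
    ring

theorem mul_log_eq_of_rpow_self_eq_exp {a c : ℝ} (ha : 0 < a) (h : a ^ a = exp c) :
    a * log a = c := by
  rw [← log_rpow ha, h, log_exp]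

/-- The amplitude `a₁ = a (log a)³ / 2` of the lower branch, where `a` stands for `a₂`. -/
def linkAmplitude (a : ℝ) : ℝ := a * log a ^ 3 / 2

/-- The inner part `f` of the shape link, with offset `a` for `a₂` and an arbitrary floor `m` in
place of `a₃ = e^{-1/2}`. -/
def shapeLink (a m x : ℝ) : ℝ :=
  if 0 < x then x ^ 2 / 2 + x + 1 else linkAmplitude a / log (a - x) ^ 2 + m

/-- The derivative of `shapeLink a m`; the value at `0` is taken from the lower branch. -/
def shapeLinkDeriv (a x : ℝ) : ℝ :=
  if 0 < x then x + 1 else 2 * linkAmplitude a / ((a - x) * log (a - x) ^ 3)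

section ShapeLink

variable {a m x : ℝ}

theorem log_sub_pos (ha : 1 < a) (hx : x ≤ 0) : 0 < log (a - x) :=
  log_pos (by linarith)

theorem linkAmplitude_pos (ha : 1 < a) : 0 < linkAmplitude a := by
  have := log_pos ha
  unfold linkAmplitude
  positivity

theorem linkAmplitude_div_log_sq_add_eq_one (ha : 1 < a) (hm : a * log a = 2 * (1 - m)) :
    linkAmplitude a / log a ^ 2 + m = 1 := by
  have := log_pos ha
  calc linkAmplitude a / log a ^ 2 + m = a * log a / 2 + m := by
        unfold linkAmplitude; field_simp
    _ = 1 := by rw [hm]; ring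

theorem two_mul_linkAmplitude_div_eq_one (ha : 1 < a) :
    2 * linkAmplitude a / (a * log a ^ 3) = 1 := by
  have := log_pos ha
  unfold linkAmplitude
  field_simp

theorem hasDerivAt_shapeLink (ha : 1 < a) (hm : a * log a = 2 * (1 - m)) (x : ℝ) :
    HasDerivAt (shapeLink a m) (shapeLinkDeriv a x) x := by
  unfold shapeLink shapeLinkDeriv
  refine hasDerivAt_ite_lt (g' := fun y ↦ y + 1)
    (h' := fun y ↦ 2 * linkAmplitude a / ((a - y) * log (a - y) ^ 3))
    (fun y _ ↦ (hasDerivAt_sq_div_two_add_add_one y).hasDerivWithinAt) (fun y hy ↦ ?_) ?_ ?_ x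
  · have hlog := (log_sub_pos ha hy).ne'
    exact ((hasDerivAt_div_log_sub_pow _ a 2 hlog).add_const m).hasDerivWithinAt
  · simp [linkAmplitude_div_log_sq_add_eq_one ha hm]
  · simp [two_mul_linkAmplitude_div_eq_one ha]

theorem continuous_shapeLinkDeriv (ha : 1 < a) : Continuous (shapeLinkDeriv a) := by
  refine continuous_ite_lt (by fun_prop) (fun y hy ↦ ?_)
    (by simp [two_mul_linkAmplitude_div_eq_one ha])
  have hlog : log (a - y) ≠ 0 := (log_sub_pos ha hy).ne'
  have hsub : a - y ≠ 0 := (log_ne_zero.mp hlog).1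
  have hdenom : (a - y) * log (a - y) ^ 3 ≠ 0 := by positivity
  exact ContinuousAt.continuousWithinAt (by fun_prop (disch := assumption))

theorem shapeLinkDeriv_pos (ha : 1 < a) (x : ℝ) : 0 < shapeLinkDeriv a x := by
  unfold shapeLinkDeriv
  split_ifs with hx
  · linarith
  · have hx := not_lt.mp hx
    have hsub : 0 < a - x := by linarith
    have hlog := log_sub_pos ha hx
    have hamp := linkAmplitude_pos ha
    positivity

theorem strictMono_shapeLink (ha : 1 < a) (hm : a * log a = 2 * (1 - m)) :
    StrictMono (shapeLink a m) :=
  strictMono_of_hasDerivAt_pos (hasDerivAt_shapeLink ha hm) (shapeLinkDeriv_pos ha)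

theorem lt_shapeLink_of_nonpos (ha : 1 < a) (hx : x ≤ 0) : m < shapeLink a m x := by
  have hlog := log_sub_pos ha hx
  have hamp := linkAmplitude_pos ha
  rw [shapeLink, if_neg hx.not_gt]
  exact lt_add_of_pos_left m (by positivity)

theorem lt_shapeLink (ha : 1 < a) (hm : a * log a = 2 * (1 - m)) (x : ℝ) :
    m < shapeLink a m x :=
  calc m < shapeLink a m (min x 0) := lt_shapeLink_of_nonpos ha (min_le_right x 0)
    _ ≤ shapeLink a m x := (strictMono_shapeLink ha hm).monotone (min_le_left x 0)

end ShapeLink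

theorem gevd_shape_link_general
    (a₁ a₂ a₃ : ℝ)
    (ha₂ : 1 < a₂)
    (ha₂eq : a₂ ^ a₂ = exp (2 * (1 - a₃)))
    (ha₁ : a₁ = a₂ * log a₂ ^ 3 / 2)
    (f : ℝ → ℝ)
    (hf : ∀ x : ℝ, f x = if 0 < x then x ^ 2 / 2 + x + 1 else a₁ / log (a₂ - x) ^ 2 + a₃) :
    (a₁ / log a₂ ^ 2 + a₃ = 1 ∧ 2 * a₁ / (a₂ * log a₂ ^ 3) = 1) ∧
    (ContDiff ℝ 1 f ∧
      (∀ x : ℝ, 0 < x → deriv f x = x + 1) ∧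
      (∀ x : ℝ, x < 0 → deriv f x = 2 * a₁ / ((a₂ - x) * log (a₂ - x) ^ 3)) ∧
      deriv f 0 = 1) ∧
    StrictMono f ∧
    (∀ x : ℝ, a₃ < f x) := by
  have hm : a₂ * log a₂ = 2 * (1 - a₃) :=
    mul_log_eq_of_rpow_self_eq_exp (zero_lt_one.trans ha₂) ha₂eq
  obtain rfl : a₁ = linkAmplitude a₂ := ha₁
  obtain rfl : f = shapeLink a₂ a₃ := funext hf
  have hderiv := hasDerivAt_shapeLink ha₂ hm
  have hslope := two_mul_linkAmplitude_div_eq_one ha₂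
  refine ⟨⟨linkAmplitude_div_log_sq_add_eq_one ha₂ hm, hslope⟩,
    ⟨contDiff_one_of_hasDerivAt hderiv (continuous_shapeLinkDeriv ha₂), fun x hx ↦ ?_,
      fun x hx ↦ ?_, ?_⟩, strictMono_shapeLink ha₂ hm, lt_shapeLink ha₂ hm⟩
  · rw [(hderiv x).deriv, shapeLinkDeriv, if_pos hx]
  · rw [(hderiv x).deriv, shapeLinkDeriv, if_neg hx.not_gt]
  · rw [(hderiv 0).deriv, shapeLinkDeriv, if_neg (lt_irrefl 0), sub_zero, hslope]

/-- **Shape-link construction for the GEVD.**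
With `a₃ = e^{-1/2}`, `a₂ > 1` a solution of `a₂ ^ a₂ = e^{2(1 - e^{-1/2})}` and
`a₁ = a₂ (log a₂)³ / 2`, the function `f` defined by `f x = x²/2 + x + 1` for `x > 0`
and `f x = a₁ / (log (a₂ - x))² + a₃` for `x ≤ 0` satisfies:
(a) `a₁/(log a₂)² + a₃ = 1` and `2a₁/(a₂ (log a₂)³) = 1`;
(b) `f` is continuously differentiable with the indicated derivatives, matching at `0`;
(c) `f` is strictly increasing; (d) `f x > e^{-1/2}` for all `x`. -/
theorem gevd_shape_link
    (a₁ a₂ a₃ : ℝ)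
    (ha₂ : 1 < a₂)
    (ha₂eq : a₂ ^ a₂ = Real.exp (2 * (1 - Real.exp (-(1 / 2)))))
    (ha₃ : a₃ = Real.exp (-(1 / 2)))
    (ha₁ : a₁ = a₂ * (Real.log a₂) ^ 3 / 2)
    (f : ℝ → ℝ)
    (hf : ∀ x : ℝ, f x = if 0 < x then x ^ 2 / 2 + x + 1
        else a₁ / (Real.log (a₂ - x)) ^ 2 + a₃) :
    (a₁ / (Real.log a₂) ^ 2 + a₃ = 1 ∧ 2 * a₁ / (a₂ * (Real.log a₂) ^ 3) = 1) ∧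
    (ContDiff ℝ 1 f ∧
      (∀ x : ℝ, 0 < x → deriv f x = x + 1) ∧
      (∀ x : ℝ, x < 0 → deriv f x = 2 * a₁ / ((a₂ - x) * (Real.log (a₂ - x)) ^ 3)) ∧
      deriv f 0 = 1) ∧
    StrictMono f ∧
    (∀ x : ℝ, Real.exp (-(1 / 2)) < f x) := by
  subst ha₃
  exact gevd_shape_link_general a₁ a₂ _ ha₂ ha₂eq ha₁ f hf
end
end
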